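/- arXiv:math/0602343 — 3 statements merged into one kernel-verified Lean document; each statement's English description precedes it below -/
import Mathlib

section
/- Let μ, ν be Borel probability measures on ℝ, neither of which is a point mass, let a ∈ ℝ, and define u_μ(z) = F_μ(z) − z + a and u_ν(z) = F_ν(z) − z + a, which are analytic self-maps of ℂ⁺. Then u_μ ∘ u_ν is a conformal automorphism of ℂ⁺ if and only if both μ and ν are convex combinations of two point masses, i.e. μ = s·δ_α + (1−s)·δ_u and ν = t·δ_β + (1−t)·δ_v for some s, t ∈ (0,1) and real numbers α ≠ u, β ≠ v. -/
open Complex Filter Set Topology MeasureTheory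

/-- The open upper half-plane `ℂ⁺ = {z : ℂ | Im z > 0}`. -/
def UHP : Set ℂ := {z : ℂ | 0 < z.im}

/-- The Cauchy transform `G_μ(z) = ∫ dμ(t)/(z − t)` of a measure `μ` on `ℝ`. -/
noncomputable def cauchyT (μ : Measure ℝ) (z : ℂ) : ℂ :=
  ∫ t, (z - (t : ℂ))⁻¹ ∂μ

/-- The reciprocal Cauchy transform `F_μ = 1/G_μ`. -/
noncomputable def Fmeas (μ : Measure ℝ) (z : ℂ) : ℂ := (cauchyT μ z)⁻¹

open ComplexConjugate in
lemma sub_conj_ne {z w : ℂ} (hz : z ∈ UHP) (hw : w ∈ UHP) : z - conj w ≠ 0 := by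
  intro h
  have := congrArg Complex.im h
  simp [UHP] at *
  linarith

open ComplexConjugate in
lemma normSq_id (z w : ℂ) :
    normSq (z - conj w) = normSq (z - w) + 4 * (z.im * w.im) := by
  simp [normSq_apply]; ring

lemma isOpen_UHP : IsOpen UHP := isOpen_lt continuous_const Complex.continuous_im

open ComplexConjugate in
/-- Schwarz-Pick on the upper half-plane. -/
lemma schwarz_pick {g : ℂ → ℂ} (hg : DifferentiableOn ℂ g UHP) (hm : MapsTo g UHP UHP)
    {z w : ℂ} (hz : z ∈ UHP) (hw : w ∈ UHP) :
    z.im * w.im * normSq (g z - conj (g w)) ≤ (g z).im * (g w).im * normSq (z - conj w) := by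
  set C : ℂ → ℂ := fun ζ => (w - conj w * ζ) / (1 - ζ) with hC
  have h1 : ∀ ζ ∈ Metric.ball (0:ℂ) 1, 1 - ζ ≠ 0 := by
    intro ζ hζ h
    have : ζ = 1 := by linear_combination -h
    simp [this] at hζ
  have hwp : 0 < w.im := hw
  have hCm : MapsTo C (Metric.ball 0 1) UHP := by
    intro ζ hζ
    have h2 := h1 ζ hζ
    have h3 : 0 < normSq (1 - ζ) := normSq_pos.2 h2
    have h4 : normSq ζ < 1 := by
      rw [normSq_eq_norm_sq]; simp at hζ; nlinarith [norm_nonneg ζ]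
    have : (C ζ).im = w.im * (1 - normSq ζ) / normSq (1 - ζ) := by
      simp only [hC, Complex.div_im]
      rw [← sub_div]
      congr 1
      simp [normSq_apply]; ring
    change 0 < (C ζ).im
    rw [this]
    apply div_pos (mul_pos hwp (by linarith)) h3
  set h : ℂ → ℂ := fun ζ => (g (C ζ) - g w) / (g (C ζ) - conj (g w)) with hh
  have hCd : DifferentiableOn ℂ C (Metric.ball 0 1) := by
    apply DifferentiableOn.div (by fun_prop) (by fun_prop) h1
  have hgC : DifferentiableOn ℂ (fun ζ => g (C ζ)) (Metric.ball 0 1) := hg.comp hCd hCm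
  have hhd : DifferentiableOn ℂ h (Metric.ball 0 1) := by
    apply DifferentiableOn.div (hgC.sub_const _) (hgC.sub_const _)
    intro ζ hζ
    exact sub_conj_ne (hm (hCm hζ)) (hm hw)
  have hhm : MapsTo h (Metric.ball 0 1) (Metric.closedBall 0 1) := by
    intro ζ hζ
    have a1 := hm (hCm hζ)
    have a2 := hm hw
    have a3 := sub_conj_ne a1 a2
    have a4 := normSq_id (g (C ζ)) (g w)
    have a5 : 0 < (g (C ζ)).im * (g w).im := mul_pos a1 a2
    simp only [hh, mem_closedBall_zero_iff, norm_div]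
    rw [div_le_one (norm_pos_iff.2 a3)]
    rw [normSq_eq_norm_sq, normSq_eq_norm_sq] at a4
    apply le_of_sq_le_sq _ (norm_nonneg _)
    linarith
  have h0 : h 0 = 0 := by simp [hh, hC]
  set ζ := (z - w) / (z - conj w) with hζ
  have b1 := sub_conj_ne hz hw
  have b4 := normSq_id z w
  have b5 : 0 < z.im * w.im := mul_pos hz hw
  have b6 : 0 < normSq (z - conj w) := normSq_pos.2 b1
  have hζ1 : ‖ζ‖ < 1 := by
    rw [hζ, norm_div, div_lt_one (norm_pos_iff.2 b1)]
    rw [normSq_eq_norm_sq, normSq_eq_norm_sq] at b4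
    apply lt_of_pow_lt_pow_left₀ 2 (norm_nonneg _)
    linarith
  have hCζ : C ζ = z := by
    have : 1 - ζ ≠ 0 := h1 ζ (by simpa using hζ1)
    simp only [hC]
    rw [div_eq_iff this, hζ]
    field_simp
    ring
  have key := Complex.norm_le_norm_of_mapsTo_ball hhd hhm h0 hζ1
  have hhζ : h ζ = (g z - g w) / (g z - conj (g w)) := by simp only [hh, hCζ]
  rw [hhζ, hζ] at key
  have c1 := sub_conj_ne (hm hz) (hm hw)
  have c6 : 0 < normSq (g z - conj (g w)) := normSq_pos.2 c1
  have key2 : normSq ((g z - g w) / (g z - conj (g w))) ≤ normSq ((z - w) / (z - conj w)) := by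
    rw [normSq_eq_norm_sq, normSq_eq_norm_sq]
    gcongr
  rw [normSq_div, normSq_div, div_le_div_iff₀ c6 b6] at key2
  have c4 := normSq_id (g z) (g w)
  have d1 : normSq (g z - g w) = normSq (g z - conj (g w)) - 4 * ((g z).im * (g w).im) := by
    linarith
  have d2 : normSq (z - w) = normSq (z - conj w) - 4 * (z.im * w.im) := by linarith
  rw [d1, d2] at key2
  nlinarith

/-- The inverse of a holomorphic bijection is holomorphic. -/
lemma inverse_holo {f : ℂ → ℂ} (hf : DifferentiableOn ℂ f UHP) (hb : BijOn f UHP UHP) :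
    DifferentiableOn ℂ (Function.invFunOn f UHP) UHP := by
  set g := Function.invFunOn f UHP with hg
  have hinv : InvOn g f UHP UHP := hb.invOn_invFunOn
  have hgm : MapsTo g UHP UHP := hb.symm hinv.symm |>.mapsTo
  have han : ∀ z ∈ UHP, AnalyticAt ℂ f z := fun z hz => hf.analyticAt (isOpen_UHP.mem_nhds hz)
  have hcont : ∀ w ∈ UHP, ContinuousAt g w := by
    intro w hw
    have hz := hgm hw
    have hfw : f (g w) = w := hinv.2 hw
    rcases (han _ hz).eventually_constant_or_nhds_le_map_nhds with h | h
    · exfalso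
      have h1 : ∀ᶠ z in 𝓝 (g w), z = g w := by
        filter_upwards [h, isOpen_UHP.mem_nhds hz] with z h1 h2
        exact hb.injOn h2 hz h1
      have h2 : {g w} ∈ 𝓝 (g w) := h1
      exact (NeBot.ne (inferInstance : (𝓝[≠] (g w)).NeBot))
        (by rw [nhdsWithin, Filter.inf_principal_eq_bot]; simpa using h2)
    · rw [hfw] at h
      have : Tendsto (g ∘ f) (𝓝 (g w)) (𝓝 (g w)) := by
        apply tendsto_id.congr'
        filter_upwards [isOpen_UHP.mem_nhds hz] with z h2
        exact (hinv.1 h2).symm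
      exact (Filter.map_mono h).trans this
  intro w hw
  have hz := hgm hw
  have hfw : f (g w) = w := hinv.2 hw
  apply DifferentiableAt.differentiableWithinAt
  apply AnalyticAt.differentiableAt
  apply Complex.analyticAt_of_differentiable_on_punctured_nhds_of_continuousAt _ (hcont w hw)
  have hne : ∀ᶠ z in 𝓝[≠] (g w), deriv f z ≠ 0 := by
    rcases (han _ hz).deriv.eventually_eq_zero_or_eventually_ne_zero with h | h
    · exfalso
      obtain ⟨r, hr, hball⟩ := Metric.mem_nhds_iff.1 (h.and (isOpen_UHP.mem_nhds hz))
      have hc : ∀ z ∈ Metric.ball (g w) r, f z = f (g w) := by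
        intro z hzb
        apply (convex_ball (g w) r).is_const_of_fderivWithin_eq_zero (𝕜 := ℂ) (f := f) _ _ hzb
          (Metric.mem_ball_self hr)
        · exact hf.mono fun x hx => (hball hx).2
        · intro x hx
          rw [fderivWithin_of_isOpen Metric.isOpen_ball hx]
          ext
          simpa using (hball hx).1
      have hp : g w + (r/2 : ℝ) ∈ Metric.ball (g w) r := by
        simp [abs_of_pos hr, hr]
      have := hb.injOn (hball hp).2 hz (hc _ hp)
      simp at this
      exact hr.ne' this
    · exact h
  have ht : Tendsto g (𝓝[≠] w) (𝓝[≠] (g w)) := by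
    apply tendsto_nhdsWithin_of_tendsto_nhds_of_eventually_within
    · exact (hcont w hw).tendsto.mono_left nhdsWithin_le_nhds
    · filter_upwards [self_mem_nhdsWithin, nhdsWithin_le_nhds (isOpen_UHP.mem_nhds hw)] with y h1 h2
      intro h3
      apply h1
      have := congrArg f h3
      rwa [hfw, hinv.2 h2] at this
  filter_upwards [ht.eventually hne, nhdsWithin_le_nhds (isOpen_UHP.mem_nhds hw)] with y h1 h2
  apply HasDerivAt.differentiableAt
  apply HasDerivAt.of_local_left_inverse (hcont y h2)
    (han _ (hgm h2)).differentiableAt.hasDerivAt h1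
  filter_upwards [isOpen_UHP.mem_nhds h2] with x hx using hinv.2 hx

open ComplexConjugate in
lemma schwarz_pick_inv {f : ℂ → ℂ} (hf : DifferentiableOn ℂ f UHP) (hb : BijOn f UHP UHP)
    {z w : ℂ} (hz : z ∈ UHP) (hw : w ∈ UHP) :
    (f z).im * (f w).im * normSq (z - conj w) ≤ z.im * w.im * normSq (f z - conj (f w)) := by
  have hinv : InvOn (Function.invFunOn f UHP) f UHP UHP := hb.invOn_invFunOn
  have hgm := hb.symm hinv.symm |>.mapsTo
  have := schwarz_pick (inverse_holo hf hb) hgm (hb.mapsTo hz) (hb.mapsTo hw)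
  rwa [hinv.1 hz, hinv.1 hw] at this

lemma sub_real_ne {z : ℂ} (hz : z ∈ UHP) (t : ℝ) : z - t ≠ 0 := by
  intro h
  have := congrArg Complex.im h
  simp [UHP] at *
  linarith

lemma norm_res_le {z : ℂ} (hz : z ∈ UHP) (t : ℝ) : ‖(z - t)⁻¹‖ ≤ (z.im)⁻¹ := by
  rw [norm_inv]
  have hz' : 0 < z.im := hz
  apply inv_anti₀ hz'
  have := Complex.abs_im_le_norm (z - t)
  simp at this
  exact (le_abs_self _).trans this

lemma cauchyT_differentiableOn (μ : Measure ℝ) [IsProbabilityMeasure μ] :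
    DifferentiableOn ℂ (cauchyT μ) UHP := by
  have h : cauchyT μ = fun z => - resolventTransform μ z := by
    ext z
    rw [cauchyT, resolventTransform_apply, ← integral_neg]
    congr 1
    ext t
    simp [resolvent, ← inv_neg]
  rw [h]
  intro z hz
  apply DifferentiableAt.differentiableWithinAt
  apply DifferentiableAt.neg
  refine (hasDerivAt_resolventTransform z ?_).differentiableAt
  rintro ⟨t, -, ht⟩
  exact sub_real_ne hz t (by rw [← ht]; simp)

/-- bounded continuous functions are integrable -/
lemma integrable_res (μ : Measure ℝ) [IsProbabilityMeasure μ] {z : ℂ} (hz : z ∈ UHP) :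
    Integrable (fun t : ℝ => (z - (t : ℂ))⁻¹) μ := by
  apply Integrable.of_bound _ (z.im)⁻¹ (ae_of_all _ (norm_res_le hz))
  exact (Continuous.inv₀ (by fun_prop) (sub_real_ne hz)).aestronglyMeasurable

open ComplexConjugate in
lemma integrable_res2 (μ : Measure ℝ) [IsProbabilityMeasure μ] {z w : ℂ} (hz : z ∈ UHP)
    (hw : w ∈ UHP) :
    Integrable (fun t : ℝ => (z - (t : ℂ))⁻¹ * conj ((w - (t : ℂ))⁻¹)) μ := by
  apply Integrable.of_bound _ ((z.im)⁻¹ * (w.im)⁻¹)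
  · apply ae_of_all
    intro t
    rw [norm_mul, RCLike.norm_conj]
    have hz' : 0 < z.im := hz
    gcongr
    · exact norm_res_le hz t
    · exact norm_res_le hw t
  · apply Continuous.aestronglyMeasurable
    have h1 := (Continuous.inv₀ (f := fun t : ℝ => z - (t:ℂ)) (by fun_prop) (sub_real_ne hz))
    have h2 := (Continuous.inv₀ (f := fun t : ℝ => w - (t:ℂ)) (by fun_prop) (sub_real_ne hw))
    exact h1.mul (Complex.continuous_conj.comp h2)

open ComplexConjugate in
lemma integrable_conj_res (μ : Measure ℝ) [IsProbabilityMeasure μ] {z : ℂ} (hz : z ∈ UHP) :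
    Integrable (fun t : ℝ => conj ((z - (t : ℂ))⁻¹)) μ :=
  Complex.conjCLE.toContinuousLinearMap.integrable_comp (integrable_res μ hz)

open ComplexConjugate in
lemma integral_conj_res (μ : Measure ℝ) (z : ℂ) :
    ∫ t, conj ((z - (t : ℂ))⁻¹) ∂μ = conj (cauchyT μ z) := by
  rw [cauchyT, integral_conj]

open ComplexConjugate in
lemma integral_res2 (μ : Measure ℝ) [IsProbabilityMeasure μ] {z w : ℂ} (hz : z ∈ UHP)
    (hw : w ∈ UHP) :
    (z - conj w) * ∫ t, (z - (t : ℂ))⁻¹ * conj ((w - (t : ℂ))⁻¹) ∂μ =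
      conj (cauchyT μ w) - cauchyT μ z := by
  rw [← integral_conj_res, cauchyT, ← integral_sub _ (integrable_res μ hz), ← integral_const_mul]
  · congr 1
    ext t
    have h1 := sub_real_ne hz t
    have h2 := (map_ne_zero (starRingEnd ℂ)).2 (sub_real_ne hw t)
    rw [map_inv₀]
    field_simp
    simp
  · exact integrable_conj_res μ hw

lemma cauchyT_ne (μ : Measure ℝ) [IsProbabilityMeasure μ] {z : ℂ} (hz : z ∈ UHP) :
    cauchyT μ z ≠ 0 := by
  intro h0
  have h := integral_res2 μ hz hz
  rw [h0, map_zero, sub_zero, mul_eq_zero] at h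
  have h := h.resolve_left (sub_conj_ne hz hz)
  have h1 : ∫ t, (z - (t : ℂ))⁻¹ * (starRingEnd ℂ) ((z - (t : ℂ))⁻¹) ∂μ
      = ((∫ t, normSq ((z - (t : ℂ))⁻¹) ∂μ : ℝ) : ℂ) := by
    rw [← integral_complex_ofReal]
    congr 1
    ext t
    rw [mul_conj]
  have h2 : Integrable (fun t : ℝ => normSq ((z - (t : ℂ))⁻¹)) μ := by
    have := (integrable_res2 μ hz hz).re
    refine this.congr (ae_of_all _ fun t => ?_)
    simp only [mul_conj]
    simp
  rw [h1, ofReal_eq_zero, integral_eq_zero_iff_of_nonneg (fun t => normSq_nonneg _) h2] at h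
  obtain ⟨t, ht⟩ := h.exists
  simp at ht
  exact sub_real_ne hz t ht

/-- the kernel functions -/
noncomputable def hker (μ : Measure ℝ) (z : ℂ) (t : ℝ) : ℂ := Fmeas μ z * (z - (t : ℂ))⁻¹ - 1

open ComplexConjugate in
lemma hker_inner (μ : Measure ℝ) [IsProbabilityMeasure μ] (a : ℝ) {z w : ℂ} (hz : z ∈ UHP)
    (hw : w ∈ UHP) :
    Integrable (fun t => hker μ z t * conj (hker μ w t)) μ ∧
    (z - conj w) * ∫ t, hker μ z t * conj (hker μ w t) ∂μ =
      (Fmeas μ z - z + a) - conj (Fmeas μ w - w + a) := by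
  have e : (fun t => hker μ z t * conj (hker μ w t)) = fun t : ℝ =>
      Fmeas μ z * conj (Fmeas μ w) * ((z - (t : ℂ))⁻¹ * conj ((w - (t : ℂ))⁻¹))
      - Fmeas μ z * (z - (t : ℂ))⁻¹ - conj (Fmeas μ w) * conj ((w - (t : ℂ))⁻¹) + 1 := by
    ext t
    simp only [hker, map_sub, map_mul, map_one]
    ring
  have i1 := (integrable_res2 μ hz hw).const_mul (Fmeas μ z * conj (Fmeas μ w))
  have i2 := (integrable_res μ hz).const_mul (Fmeas μ z)
  have i3 := (integrable_conj_res μ hw).const_mul (conj (Fmeas μ w))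
  have i4 : Integrable (fun t : ℝ => (1 : ℂ)) μ := integrable_const _
  rw [e]
  refine ⟨((i1.sub i2).sub i3).add i4, ?_⟩
  have hG := cauchyT_ne μ hz
  have hG2 := (map_ne_zero (starRingEnd ℂ)).2 (cauchyT_ne μ hw)
  have i12 : Integrable (fun t : ℝ => Fmeas μ z * conj (Fmeas μ w) *
      ((z - (t : ℂ))⁻¹ * conj ((w - (t : ℂ))⁻¹)) - Fmeas μ z * (z - (t : ℂ))⁻¹) μ := i1.sub i2
  have i123 : Integrable (fun t : ℝ => Fmeas μ z * conj (Fmeas μ w) *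
      ((z - (t : ℂ))⁻¹ * conj ((w - (t : ℂ))⁻¹)) - Fmeas μ z * (z - (t : ℂ))⁻¹
      - conj (Fmeas μ w) * conj ((w - (t : ℂ))⁻¹)) μ := i12.sub i3
  rw [integral_add i123 i4, integral_sub i12 i3, integral_sub i1 i2,
    integral_const_mul, integral_const_mul, integral_const_mul, integral_conj_res, ← cauchyT]
  have h := integral_res2 μ hz hw
  set J := ∫ t, (z - (t : ℂ))⁻¹ * conj ((w - (t : ℂ))⁻¹) ∂μ
  have hF : Fmeas μ z * cauchyT μ z = 1 := inv_mul_cancel₀ hG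
  have hF2 : conj (Fmeas μ w) * conj (cauchyT μ w) = 1 := by
    rw [← map_mul, Fmeas, inv_mul_cancel₀ (cauchyT_ne μ hw), map_one]
  rw [hF, hF2]
  simp only [integral_const, probReal_univ, one_smul, map_add, map_sub, conj_ofReal]
  linear_combination (Fmeas μ z * conj (Fmeas μ w)) * h + Fmeas μ z * hF2 - conj (Fmeas μ w) * hF

lemma dirac_of_ae (μ : Measure ℝ) [IsProbabilityMeasure μ] (c : ℝ) (h : ∀ᵐ t ∂μ, t = c) :
    μ = Measure.dirac c := by
  have h1 : μ {c}ᶜ = 0 := h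
  have h2 : μ {c} = 1 := (prob_compl_eq_zero_iff (measurableSet_singleton c)).1 h1
  ext s hs
  rw [Measure.dirac_apply' _ hs]
  by_cases hc : c ∈ s
  · simp only [hc, indicator_of_mem, Pi.one_apply]
    apply le_antisymm prob_le_one
    rw [← h2]
    exact measure_mono (by simpa using hc)
  · simp only [hc, not_false_eq_true, indicator_of_notMem]
    apply measure_mono_null _ h1
    intro x hx hxc
    simp at hxc
    exact hc (hxc ▸ hx)

def TwoAtoms (μ : Measure ℝ) : Prop := ∃ s α u : ℝ, s ∈ Set.Ioo (0:ℝ) 1 ∧ α ≠ u ∧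
          μ = ENNReal.ofReal s • Measure.dirac α +
              ENNReal.ofReal (1 - s) • Measure.dirac u

lemma two_atoms_of_ae (μ : Measure ℝ) [IsProbabilityMeasure μ]
    (hμ : ¬ ∃ c : ℝ, μ = Measure.dirac c) (α u : ℝ) (hne : α ≠ u)
    (h : ∀ᵐ t ∂μ, t = α ∨ t = u) : TwoAtoms μ := by
  have h1 : μ ({α, u} : Set ℝ)ᶜ = 0 := h
  have h2 : μ.real {α} + μ.real {u} = 1 := by
    have : μ ({α, u} : Set ℝ) = 1 :=
      (prob_compl_eq_zero_iff ((measurableSet_singleton u).insert α)).1 h1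
    rw [← measureReal_union (by simpa using hne) (measurableSet_singleton u)]
    rw [measureReal_def, ← insert_eq, this, ENNReal.toReal_one]
  have pos : ∀ x y : ℝ, (∀ᵐ t ∂μ, t = x ∨ t = y) → 0 < μ.real {x} := by
    intro x y hxy
    rw [measureReal_def, ENNReal.toReal_pos_iff]
    refine ⟨?_, measure_lt_top _ _⟩
    rw [pos_iff_ne_zero]
    intro h0
    apply hμ
    refine ⟨y, dirac_of_ae μ y ?_⟩
    have : ∀ᵐ t ∂μ, t ≠ x := by
      rw [ae_iff]; simpa using h0
    filter_upwards [this, hxy] with t h1 h2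
    exact h2.resolve_left h1
  have p1 := pos α u h
  have p2 := pos u α (h.mono fun t => Or.symm)
  refine ⟨μ.real {α}, α, u, ⟨p1, by linarith⟩, hne, ?_⟩
  have e1 : ENNReal.ofReal (μ.real {α}) = μ {α} := by simp
  have e2 : ENNReal.ofReal (1 - μ.real {α}) = μ {u} := by
    rw [show 1 - μ.real {α} = μ.real {u} by linarith]; simp
  rw [e1, e2]
  conv_lhs => rw [← Measure.restrict_eq_self_of_ae_mem (s := {α} ∪ {u}) (μ := μ) (h.mono fun t ht => by simpa using ht.symm)]
  rw [Measure.restrict_union (by simpa using hne) (measurableSet_singleton u),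
    Measure.restrict_singleton, Measure.restrict_singleton]

open ComplexConjugate in
lemma hker_normSq (μ : Measure ℝ) [IsProbabilityMeasure μ] (a : ℝ) {z : ℂ} (hz : z ∈ UHP) :
    ∫ t, normSq (hker μ z t) ∂μ = (Fmeas μ z - z + a).im / z.im := by
  have h := (hker_inner μ a hz hz).2
  have hz' : 0 < z.im := hz
  simp only [mul_conj, integral_complex_ofReal, sub_conj] at h
  rw [mul_assoc, mul_comm I] at h
  rw [eq_div_iff hz'.ne']
  have := congrArg Complex.im h
  simp at this
  simp
  linarith

lemma hker_cont (μ : Measure ℝ) {z : ℂ} (hz : z ∈ UHP) : Continuous (hker μ z) := by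
  have h1 := (Continuous.inv₀ (f := fun t : ℝ => z - (t:ℂ)) (by fun_prop) (sub_real_ne hz))
  exact (continuous_const.mul h1).sub continuous_const

lemma hker_normSq_int (μ : Measure ℝ) [IsProbabilityMeasure μ] {z : ℂ} (hz : z ∈ UHP) :
    Integrable (fun t => normSq (hker μ z t)) μ := by
  refine (hker_inner μ 0 hz hz).1.re.congr (ae_of_all _ fun t => ?_)
  simp only [mul_conj]
  simp

lemma u_maps (μ : Measure ℝ) [IsProbabilityMeasure μ]
    (hμ : ¬ ∃ c : ℝ, μ = Measure.dirac c) (a : ℝ) :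
    MapsTo (fun z => Fmeas μ z - z + (a : ℂ)) UHP UHP := by
  intro z hz
  have hz' : 0 < z.im := hz
  have h := hker_normSq μ a hz
  have h0 : 0 ≤ ∫ t, normSq (hker μ z t) ∂μ := integral_nonneg fun t => normSq_nonneg _
  change 0 < (Fmeas μ z - z + a).im
  rw [eq_div_iff hz'.ne'] at h
  rw [← h]
  apply mul_pos (lt_of_le_of_ne h0 _) hz'
  intro h1
  have h2 := (integral_eq_zero_iff_of_nonneg (fun t => normSq_nonneg _) (hker_normSq_int μ hz)).1
    h1.symm
  apply hμ
  refine ⟨(z - Fmeas μ z).re, dirac_of_ae _ _ ?_⟩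
  filter_upwards [h2] with t ht
  simp [hker] at ht
  have := sub_real_ne hz t
  rw [sub_eq_zero, ← div_eq_mul_inv, div_eq_one_iff_eq this] at ht
  rw [show z - Fmeas μ z = t by rw [ht]; ring]
  simp

open ComplexConjugate in
lemma u_pick (μ : Measure ℝ) [IsProbabilityMeasure μ]
    (hμ : ¬ ∃ c : ℝ, μ = Measure.dirac c) (a : ℝ) {z w : ℂ} (hz : z ∈ UHP) (hw : w ∈ UHP)
    (hzw : z ≠ w) (U V : ℂ) (hU : U = Fmeas μ z - z + a) (hV : V = Fmeas μ w - w + a) :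
    z.im * w.im * normSq (U - conj V) ≤ U.im * V.im * normSq (z - conj w) ∧
    (z.im * w.im * normSq (U - conj V) = U.im * V.im * normSq (z - conj w) → TwoAtoms μ) := by
  have hz' : 0 < z.im := hz
  have hw' : 0 < w.im := hw
  have hUp : 0 < U.im := hU ▸ u_maps μ hμ a hz
  have hVp : 0 < V.im := hV ▸ u_maps μ hμ a hw
  obtain ⟨hi, hK⟩ := hker_inner μ a hz hw
  rw [← hU, ← hV] at hK
  set K := ∫ t, hker μ z t * conj (hker μ w t) ∂μ with hKdef
  have hzz := hker_normSq μ a hz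
  have hww := hker_normSq μ a hw
  rw [← hU] at hzz
  rw [← hV] at hww
  set c : ℂ := K * ((w.im / V.im : ℝ) : ℂ) with hc
  have e : ∀ t, normSq (hker μ z t - c * hker μ w t) = normSq (hker μ z t)
      + normSq c * normSq (hker μ w t) - 2 * (conj c * (hker μ z t * conj (hker μ w t))).re := by
    intro t
    rw [normSq_sub, normSq_mul, map_mul (starRingEnd ℂ)]
    rw [show hker μ z t * (conj c * conj (hker μ w t))
      = conj c * (hker μ z t * conj (hker μ w t)) by ring]
  have i1 := hker_normSq_int μ hz
  have i2 := (hker_normSq_int μ hw).const_mul (normSq c)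
  have i3 : Integrable (fun t => 2 * (conj c * (hker μ z t * conj (hker μ w t))).re) μ :=
    ((hi.const_mul (conj c)).re).const_mul 2
  have i12 : Integrable (fun t => normSq (hker μ z t) + normSq c * normSq (hker μ w t)) μ :=
    i1.add i2
  have i123 : Integrable (fun t => normSq (hker μ z t - c * hker μ w t)) μ := by
    simp only [e]
    exact (i1.add i2).sub i3
  have I : ∫ t, normSq (hker μ z t - c * hker μ w t) ∂μ
      = U.im / z.im - normSq K * (w.im / V.im) := by
    simp only [e]
    rw [integral_sub i12 i3, integral_add i1 i2, integral_const_mul, integral_const_mul]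
    have : ∫ t, (conj c * (hker μ z t * conj (hker μ w t))).re ∂μ = (conj c * K).re := by
      rw [hKdef, ← integral_const_mul]
      exact integral_re (hi.const_mul (conj c))
    rw [this, hzz, hww, hc]
    have : (conj (K * ((w.im / V.im : ℝ) : ℂ)) * K) = ((normSq K * (w.im / V.im) : ℝ) : ℂ) := by
      rw [map_mul, conj_ofReal]
      push_cast
      rw [normSq_eq_conj_mul_self]
      ring
    rw [this, ofReal_re, normSq_mul, normSq_ofReal]
    field_simp
    ring
  have hN : normSq (U - conj V) = normSq (z - conj w) * normSq K := by
    rw [← hK, normSq_mul]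
  have hP : 0 < normSq (z - conj w) := normSq_pos.2 (sub_conj_ne hz hw)
  have I0 : 0 ≤ ∫ t, normSq (hker μ z t - c * hker μ w t) ∂μ :=
    integral_nonneg fun t => normSq_nonneg _
  have I' : U.im * V.im * normSq (z - conj w) - z.im * w.im * normSq (U - conj V) =
      (∫ t, normSq (hker μ z t - c * hker μ w t) ∂μ) * (z.im * V.im * normSq (z - conj w)) := by
    rw [I, hN]
    field_simp
  have hq : 0 < z.im * V.im * normSq (z - conj w) := by positivity
  refine ⟨by nlinarith [mul_nonneg I0 hq.le], fun heq => ?_⟩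
  rw [heq, sub_self] at I'
  have I1 := (mul_eq_zero.1 I'.symm).resolve_right hq.ne'
  have h2 := (integral_eq_zero_iff_of_nonneg (fun t => normSq_nonneg _) i123).1 I1
  set Z := Fmeas μ z with hZ
  set W := Fmeas μ w with hW
  have hZ0 : Z ≠ 0 := inv_ne_zero (cauchyT_ne μ hz)
  have hpoly : ∀ᵐ t : ℝ ∂μ,
      (c - 1) * (z - t) * (w - t) + Z * (w - t) - c * W * (z - t) = 0 := by
    filter_upwards [h2] with t ht
    simp only [Pi.zero_apply, normSq_eq_zero, hker] at ht
    have n1 := sub_real_ne hz t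
    have n2 := sub_real_ne hw t
    rw [← hZ, ← hW] at ht
    field_simp at ht
    linear_combination ht
  obtain ⟨α, hα⟩ := hpoly.exists
  have hex : ∃ u : ℝ, u ≠ α ∧ (c - 1) * (z - u) * (w - u) + Z * (w - u) - c * W * (z - u) = 0 := by
    by_contra hcon
    push Not at hcon
    apply hμ
    refine ⟨α, dirac_of_ae _ _ ?_⟩
    filter_upwards [hpoly] with t ht
    by_contra h
    exact hcon t h ht
  obtain ⟨u, hu, hu0⟩ := hex
  apply two_atoms_of_ae μ hμ α u hu.symm
  filter_upwards [hpoly] with t ht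
  by_contra hcon
  push Not at hcon
  obtain ⟨t1, t2⟩ := hcon
  -- a quadratic with three roots
  have n1 : (t : ℂ) - α ≠ 0 := by rw [sub_ne_zero]; exact_mod_cast t1
  have n2 : (t : ℂ) - u ≠ 0 := by rw [sub_ne_zero]; exact_mod_cast t2
  have n3 : (u : ℂ) - α ≠ 0 := by rw [sub_ne_zero]; exact_mod_cast hu
  have s1 : (c - 1) * (t + α - z - w) - Z + c * W = 0 := by
    apply mul_left_cancel₀ n1
    linear_combination ht - hα
  have s2 : (c - 1) * (u + α - z - w) - Z + c * W = 0 := by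
    apply mul_left_cancel₀ n3
    linear_combination hu0 - hα
  have s3 : c - 1 = 0 := by
    apply mul_left_cancel₀ n2
    linear_combination s1 - s2
  have s4 : Z = c * W := by
    linear_combination (u + α - z - w) * s3 - s2
  have s5 : Z * (w - z) = 0 := by
    linear_combination hα - (z - α) * (w - α) * s3 - (z - α) * s4
  rcases mul_eq_zero.1 s5 with h | h
  · exact hZ0 h
  · exact hzw (sub_eq_zero.1 h).symm

/-- Möbius bijection -/
lemma moebius_bij (c m k : ℝ) (hk : 0 < k) :
    BijOn (fun z : ℂ => (c : ℂ) - k / (z - m)) UHP UHP := by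
  have im1 : ∀ (p q : ℝ) (z : ℂ), z ∈ UHP → (p : ℂ) - k / (z - q) ∈ UHP := by
    intro p q z hz
    have hz' : 0 < z.im := hz
    have h3 : 0 < normSq (z - q) := normSq_pos.2 (sub_real_ne hz q)
    change 0 < ((p : ℂ) - k / (z - q)).im
    simp [Complex.div_im]
    positivity
  refine ⟨fun z hz => im1 c m z hz, ?_, ?_⟩
  · intro z hz w hw h
    have h1 := sub_real_ne hz m
    have h2 := sub_real_ne hw m
    have hk' : (k : ℂ) ≠ 0 := by exact_mod_cast hk.ne'
    simp only [sub_right_inj] at h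
    rw [div_eq_div_iff h1 h2] at h
    have := mul_left_cancel₀ hk' h
    linear_combination -this
  · intro y hy
    refine ⟨m - k / (y - c), im1 m c y hy, ?_⟩
    have h1 := sub_real_ne hy c
    have hk' : (k : ℂ) ≠ 0 := by exact_mod_cast hk.ne'
    simp only
    rw [show (m : ℂ) - k / (y - c) - m = - (k / (y - c)) by ring, div_neg, div_div_cancel₀ hk']
    ring

lemma u_bij (μ : Measure ℝ) [IsProbabilityMeasure μ] (a : ℝ) (h : TwoAtoms μ) :
    BijOn (fun z => Fmeas μ z - z + (a : ℂ)) UHP UHP := by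
  obtain ⟨s, α, u, ⟨hs0, hs1⟩, hne, rfl⟩ := h
  have hk : 0 < s * (1 - s) * (α - u) ^ 2 := by
    have : α - u ≠ 0 := sub_ne_zero.2 hne
    have : 0 < 1 - s := by linarith
    positivity
  refine (moebius_bij (a - (s * α + (1 - s) * u)) (s * u + (1 - s) * α)
    (s * (1 - s) * (α - u) ^ 2) hk).congr ?_
  intro z hz
  have n1 := sub_real_ne hz α
  have n2 := sub_real_ne hz u
  have n3 := sub_real_ne hz (s * u + (1 - s) * α)
  have hG : cauchyT (ENNReal.ofReal s • Measure.dirac α +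
      ENNReal.ofReal (1 - s) • Measure.dirac u) z = s * (z - α)⁻¹ + (1 - s) * (z - u)⁻¹ := by
    rw [cauchyT, integral_add_measure, integral_smul_measure, integral_smul_measure,
      integral_dirac, integral_dirac, ENNReal.toReal_ofReal hs0.le,
      ENNReal.toReal_ofReal (by linarith)]
    · simp
    · exact (integrable_res (Measure.dirac α) hz).smul_measure (by simp)
    · exact (integrable_res (Measure.dirac u) hz).smul_measure (by simp)
  have hF : s * (z - α)⁻¹ + (1 - s) * (z - u)⁻¹
      = (z - ((s * u + (1 - s) * α : ℝ) : ℂ)) / ((z - α) * (z - u)) := by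
    field_simp
    push_cast
    ring
  simp only [Fmeas, hG]
  rw [hF, inv_div]
  have e : ∀ A B C D : ℂ, D ≠ 0 → A * D - B = C - (z - a) * D → A - B / D = C / D - z + a := by
    intro A B C D hD h
    field_simp
    linear_combination h
  apply e _ _ _ _ n3
  push_cast
  ring

theorem special_case_two_atoms
    (μ ν : Measure ℝ) [IsProbabilityMeasure μ] [IsProbabilityMeasure ν]
    (hμ : ¬ ∃ c : ℝ, μ = Measure.dirac c) (hν : ¬ ∃ c : ℝ, ν = Measure.dirac c)
    (a : ℝ) :
    (Set.BijOn
        (fun z => Fmeas μ (Fmeas ν z - z + (a : ℂ)) - (Fmeas ν z - z + (a : ℂ)) + (a : ℂ))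
        UHP UHP) ↔
      ((∃ s α u : ℝ, s ∈ Set.Ioo (0:ℝ) 1 ∧ α ≠ u ∧
          μ = ENNReal.ofReal s • Measure.dirac α +
              ENNReal.ofReal (1 - s) • Measure.dirac u) ∧
       (∃ t β v : ℝ, t ∈ Set.Ioo (0:ℝ) 1 ∧ β ≠ v ∧
          ν = ENNReal.ofReal t • Measure.dirac β +
              ENNReal.ofReal (1 - t) • Measure.dirac v)) := by
  constructor
  · intro hb
    change TwoAtoms μ ∧ TwoAtoms ν
    have diff : ∀ (ρ : Measure ℝ) [IsProbabilityMeasure ρ],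
        DifferentiableOn ℂ (fun z => Fmeas ρ z - z + (a : ℂ)) UHP := by
      intro ρ _
      have : DifferentiableOn ℂ (Fmeas ρ) UHP :=
        (cauchyT_differentiableOn ρ).inv fun z hz => cauchyT_ne ρ hz
      exact (this.sub differentiableOn_id).add_const _
    have hd : DifferentiableOn ℂ (fun z => Fmeas μ (Fmeas ν z - z + (a : ℂ)) -
        (Fmeas ν z - z + (a : ℂ)) + (a : ℂ)) UHP :=
      (diff μ).comp (diff ν) (u_maps ν hν a)
    have hz : I ∈ UHP := by simp [UHP]
    have hw : 2 * I ∈ UHP := by simp [UHP]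
    have hne : I ≠ 2 * I := by
      intro h
      have := congrArg Complex.im h
      simp at this
    have key := schwarz_pick_inv hd hb hz hw
    have inj := fun h => hne (hb.injOn hz hw h)
    set U := Fmeas ν I - I + (a : ℂ) with hU
    set V := Fmeas ν (2 * I) - 2 * I + (a : ℂ) with hV
    have hUm : U ∈ UHP := u_maps ν hν a hz
    have hVm : V ∈ UHP := u_maps ν hν a hw
    have hUV : U ≠ V := fun h => inj (by rw [h])
    set P := Fmeas μ U - U + (a : ℂ) with hP
    set Q := Fmeas μ V - V + (a : ℂ) with hQ
    have hPm : 0 < P.im := u_maps μ hμ a hUm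
    have hQm : 0 < Q.im := u_maps μ hμ a hVm
    obtain ⟨k1, k1'⟩ := u_pick ν hν a hz hw hne U V hU hV
    obtain ⟨k2, k2'⟩ := u_pick μ hμ a hUm hVm hUV P Q hP hQ
    have p1 : 0 < I.im * (2 * I).im := mul_pos hz hw
    have p2 : 0 < U.im * V.im := mul_pos hUm hVm
    have p3 : 0 < P.im * Q.im := mul_pos hPm hQm
    have q1 : 0 < normSq (I - (starRingEnd ℂ) (2 * I)) := normSq_pos.2 (sub_conj_ne hz hw)
    have q2 : 0 < normSq (U - (starRingEnd ℂ) V) := normSq_pos.2 (sub_conj_ne hUm hVm)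
    have q3 : 0 < normSq (P - (starRingEnd ℂ) Q) := normSq_pos.2 (sub_conj_ne hPm hQm)
    generalize I.im * (2 * I).im = A1 at *
    generalize U.im * V.im = A2 at *
    generalize P.im * Q.im = A3 at *
    generalize normSq (I - (starRingEnd ℂ) (2 * I)) = B1 at *
    generalize normSq (U - (starRingEnd ℂ) V) = B2 at *
    generalize normSq (P - (starRingEnd ℂ) Q) = B3 at *
    rw [← div_le_div_iff₀ q3 q1] at key
    rw [← div_le_div_iff₀ q1 q2] at k1
    rw [← div_le_div_iff₀ q2 q3] at k2
    refine ⟨k2' ?_, k1' ?_⟩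
    · rw [← div_eq_div_iff q2.ne' q3.ne']; linarith
    · rw [← div_eq_div_iff q1.ne' q2.ne']; linarith
  · rintro ⟨h1, h2⟩
    exact (u_bij μ a h1).comp (u_bij ν a h2)
end

section
/- Let η : ℂ ∖ [0,+∞) → ℂ ∖ {0} be an analytic function with η(conj(z)) = conj(η(z)) for all z in its domain. Then the following are equivalent: (1) there exists a Borel probability measure μ ≠ δ₀ on [0,+∞) such that η = η_μ; (2) lim_{x↑0, x<0} η(x) = 0 and arg η(z) ∈ [arg z, π) for all z ∈ ℂ⁺. Moreover, a probability measure μ ≠ δ₀ on [0,+∞) is a point mass if and only if there exists z ∈ ℂ⁺ with arg η_μ(z) = arg z. -/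
open Complex Filter Set Topology MeasureTheory

/-- The slit plane `ℂ ∖ [0,+∞)`. -/
def SlitP : Set ℂ := {z : ℂ | z.re < 0 ∨ z.im ≠ 0}

/-- The moment generating function `ψ_μ(z) = ∫ zt/(1 − zt) dμ(t)` of a measure
supported on `[0,+∞)`. -/
noncomputable def psiP (μ : Measure ℝ) (z : ℂ) : ℂ :=
  ∫ t, (z * (t : ℂ)) / (1 - z * (t : ℂ)) ∂μ

/-- The `η`-transform `η_μ = ψ_μ/(1 + ψ_μ)`. -/
noncomputable def etaP (μ : Measure ℝ) (z : ℂ) : ℂ := psiP μ z / (1 + psiP μ z)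

lemma arg_im_mul_conj (a b : ℂ) :
    (b * (starRingEnd ℂ) a).im = ‖a‖ * ‖b‖ * Real.sin (b.arg - a.arg) := by
  rw [Real.sin_sub]
  have h1 := Complex.norm_mul_cos_arg a
  have h2 := Complex.norm_mul_sin_arg a
  have h3 := Complex.norm_mul_cos_arg b
  have h4 := Complex.norm_mul_sin_arg b
  simp only [Complex.mul_im, Complex.conj_re, Complex.conj_im]
  rw [← h1, ← h2, ← h3, ← h4]
  ring

lemma arg_pos_of_im_pos {a : ℂ} (h : 0 < a.im) : 0 < a.arg ∧ a.arg < Real.pi := by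
  refine ⟨lt_of_le_of_ne (Complex.arg_nonneg_iff.2 h.le) ?_, Complex.arg_lt_pi_iff.2 (Or.inr h.ne')⟩
  intro h0
  have := Complex.arg_eq_zero_iff.1 h0.symm
  linarith [this.2]

lemma im_pos_of_arg {a : ℂ} (h : 0 < a.arg) (h2 : a.arg < Real.pi) : 0 < a.im := by
  have h0 : a ≠ 0 := by rintro rfl; simp at h
  rw [← Complex.norm_mul_sin_arg a]
  exact mul_pos (norm_pos_iff.2 h0) (Real.sin_pos_of_pos_of_lt_pi h h2)

lemma arg_le_iff_im {a b : ℂ} (ha : 0 < a.im) (hb : 0 < b.im) :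
    a.arg ≤ b.arg ↔ 0 ≤ (b * (starRingEnd ℂ) a).im := by
  have ha' := arg_pos_of_im_pos ha
  have hb' := arg_pos_of_im_pos hb
  have ha0 : 0 < ‖a‖ := norm_pos_iff.2 (by rintro rfl; simp at ha)
  have hb0 : 0 < ‖b‖ := norm_pos_iff.2 (by rintro rfl; simp at hb)
  rw [arg_im_mul_conj]
  constructor
  · intro h
    have := Real.sin_nonneg_of_nonneg_of_le_pi (x := b.arg - a.arg) (by linarith) (by linarith)
    positivity
  · intro h
    by_contra! hlt
    have := Real.sin_neg_of_neg_of_neg_pi_lt (x := b.arg - a.arg) (by linarith) (by linarith)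
    have := mul_neg_of_pos_of_neg (mul_pos ha0 hb0) this
    linarith

lemma slit_bound {z : ℂ} (hz : z ∈ SlitP) :
    ∃ C : ℝ, ∀ t : ℝ, 0 ≤ t → 1 - z * (t : ℂ) ≠ 0 ∧ ‖1 / (1 - z * (t : ℂ))‖ ≤ C := by
  suffices H : ∃ c : ℝ, 0 < c ∧ ∀ t : ℝ, 0 ≤ t → c ≤ ‖1 - z * (t : ℂ)‖ by
    obtain ⟨c, hc, H⟩ := H
    refine ⟨1 / c, fun t ht => ⟨?_, ?_⟩⟩
    · exact norm_pos_iff.1 (hc.trans_le (H t ht))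
    · rw [norm_div, norm_one]
      exact one_div_le_one_div_of_le hc (H t ht)
  rcases hz with h | h
  · refine ⟨1, one_pos, fun t ht => ?_⟩
    have h1 := Complex.re_le_norm (1 - z * (t : ℂ))
    simp at h1
    nlinarith
  · have hz0 : 0 < ‖z‖ := norm_pos_iff.2 (by rintro rfl; simp at h)
    refine ⟨|z.im| / ‖z‖, div_pos (abs_pos.2 h) hz0, fun t ht => ?_⟩
    rw [div_le_iff₀ hz0]
    have h1 := Complex.abs_im_le_norm ((1 - z * (t : ℂ)) * (starRingEnd ℂ) z)
    rw [norm_mul, Complex.norm_conj] at h1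
    have h2 : ((1 - z * (t : ℂ)) * (starRingEnd ℂ) z).im = - z.im := by
      simp; ring
    rwa [h2, abs_neg] at h1

lemma ae_nonneg_of {μ : Measure ℝ} (h : μ (Set.Iio 0) = 0) : ∀ᵐ t ∂μ, 0 ≤ t := by
  rw [ae_iff]
  convert h using 2
  ext t; simp

lemma inv_integrable {μ : Measure ℝ} [IsProbabilityMeasure μ] (h : μ (Set.Iio 0) = 0)
    {z : ℂ} (hz : z ∈ SlitP) : Integrable (fun t : ℝ => 1 / (1 - z * (t : ℂ))) μ := by
  obtain ⟨C, hC⟩ := slit_bound hz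
  refine Integrable.of_bound (C := C) ?_ ?_
  · exact Measurable.aestronglyMeasurable (by fun_prop)
  · filter_upwards [ae_nonneg_of h] with t ht using (hC t ht).2

lemma psi_add_one {μ : Measure ℝ} [IsProbabilityMeasure μ] (h : μ (Set.Iio 0) = 0)
    {z : ℂ} (hz : z ∈ SlitP) : psiP μ z = (∫ t : ℝ, 1 / (1 - z * (t : ℂ)) ∂μ) - 1 := by
  obtain ⟨C, hC⟩ := slit_bound hz
  have h1 : (1 : ℂ) = ∫ _t : ℝ, (1 : ℂ) ∂μ := by simp
  conv_rhs => rw [h1]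
  rw [psiP, ← integral_sub]
  · apply integral_congr_ae
    filter_upwards [ae_nonneg_of h] with t ht
    have := (hC t ht).1
    simp only [← h1]
    field_simp
    ring
  · simpa using inv_integrable h hz
  · exact integrable_const _

lemma eq_dirac_of_ae {μ : Measure ℝ} [IsProbabilityMeasure μ] {c : ℝ} (h : ∀ᵐ t ∂μ, t = c) :
    μ = Measure.dirac c := by
  have h1 : μ.map id = μ.map (fun _ => c) := Measure.map_congr h
  rw [Measure.map_id, Measure.map_const] at h1
  simpa using h1

lemma eta_formula {μ : Measure ℝ} [IsProbabilityMeasure μ] (h : μ (Set.Iio 0) = 0)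
    (hμ : μ ≠ Measure.dirac 0) {z : ℂ} (hz : 0 < z.im) :
    0 < (etaP μ z).im ∧ 0 ≤ (etaP μ z * (starRingEnd ℂ) z).im ∧
      ((etaP μ z * (starRingEnd ℂ) z).im = 0 → ∃ c : ℝ, μ = Measure.dirac c) := by
  have hzS : z ∈ SlitP := Or.inr hz.ne'
  have hne : ∀ t : ℝ, 1 - z * (t : ℂ) ≠ 0 := by
    intro t ht
    have h1 := congrArg Complex.im ht
    have h2 := congrArg Complex.re ht
    simp at h1 h2
    rcases h1 with h1 | h1
    · exact hz.ne' h1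
    · simp [h1] at h2
  set w : ℝ → ℝ := fun t => 1 / Complex.normSq (1 - z * (t : ℂ)) with hw
  have hwpos : ∀ t, 0 < w t := fun t => one_div_pos.2 (Complex.normSq_pos.2 (hne t))
  have hI1 := inv_integrable h hzS
  obtain ⟨C, hC⟩ := slit_bound hzS
  have hmeasw : Measurable w := by
    rw [hw]
    have : Measurable Complex.normSq := Complex.continuous_normSq.measurable
    fun_prop
  have hwn : ∀ t, w t = ‖1 / (1 - z * (t : ℂ))‖ ^ 2 := by
    intro t
    simp only [hw]
    rw [norm_div, norm_one, div_pow, Complex.normSq_eq_norm_sq]; simp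
  have hC0 : 0 ≤ C := (norm_nonneg _).trans (hC 0 le_rfl).2
  have hz0 : 0 < ‖z‖ := norm_pos_iff.2 (by rintro rfl; simp at hz)
  have hwb : ∀ t, 0 ≤ t → w t ≤ C ^ 2 := by
    intro t ht
    rw [hwn]
    exact pow_le_pow_left₀ (norm_nonneg _) (hC t ht).2 2
  have htb : ∀ t : ℝ, 0 ≤ t → t * ‖1 / (1 - z * (t : ℂ))‖ ≤ (1 + C) / ‖z‖ := by
    intro t ht
    rw [le_div_iff₀ hz0]
    have : z * t * (1 / (1 - z * (t : ℂ))) = 1 / (1 - z * (t : ℂ)) - 1 := by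
      have := hne t
      field_simp
      ring
    have h2 := congrArg norm this
    rw [norm_mul, norm_mul, Complex.norm_of_nonneg ht] at h2
    have h3 := norm_sub_le (1 / (1 - z * (t : ℂ))) 1
    rw [norm_one] at h3
    have := (hC t ht).2
    nlinarith
  have hIw : Integrable w μ := by
    refine Integrable.of_bound (C := C ^ 2) hmeasw.aestronglyMeasurable ?_
    filter_upwards [ae_nonneg_of h] with t ht
    rw [Real.norm_of_nonneg (hwpos t).le]
    exact hwb t ht
  have hIt2 : Integrable (fun t => t ^ 2 * w t) μ := by
    refine Integrable.of_bound (C := ((1 + C) / ‖z‖) ^ 2)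
      (Measurable.aestronglyMeasurable (by fun_prop)) ?_
    filter_upwards [ae_nonneg_of h] with t ht
    rw [Real.norm_of_nonneg (mul_nonneg (sq_nonneg _) (hwpos t).le), hwn, ← mul_pow]
    exact pow_le_pow_left₀ (by positivity) (htb t ht) 2
  have hIt : Integrable (fun t => t * w t) μ := by
    refine Integrable.mono' (hIw.add hIt2)
      (Measurable.aestronglyMeasurable (by fun_prop)) ?_
    filter_upwards with t
    rw [Real.norm_eq_abs, abs_mul, abs_of_pos (hwpos t)]
    have := hwpos t
    simp only [Pi.add_apply]
    have h3 : |t| ≤ 1 + t ^ 2 := by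
      rw [abs_le]; constructor <;> nlinarith [sq_nonneg (t + 1), sq_nonneg (t - 1)]
    nlinarith
  set a := ∫ t, w t ∂μ with ha
  set b := ∫ t, t * w t ∂μ with hb
  set c := ∫ t, t ^ 2 * w t ∂μ with hc
  have hapos : 0 < a := by
    rw [ha, integral_pos_iff_support_of_nonneg (fun t => (hwpos t).le) hIw]
    have : Function.support w = Set.univ := by
      ext t; simp [(hwpos t).ne']
    rw [this]; simp
  have hbnn : 0 ≤ᵐ[μ] fun t => t * w t := by
    filter_upwards [ae_nonneg_of h] with t ht
    exact mul_nonneg ht (hwpos t).le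
  have hbpos : 0 < b := by
    refine lt_of_le_of_ne (integral_nonneg_of_ae hbnn) fun h0 => hμ ?_
    have := (integral_eq_zero_iff_of_nonneg_ae hbnn hIt).1 h0.symm
    apply eq_dirac_of_ae
    filter_upwards [this] with t ht
    simpa [(hwpos t).ne'] using ht
  -- the two integrals
  have hinv : ∀ t : ℝ, 1 / (1 - z * (t : ℂ)) =
      ((w t : ℝ) : ℂ) - (starRingEnd ℂ) z * ((t * w t : ℝ) : ℂ) := by
    intro t
    have h1 := hne t
    have h2 : (Complex.normSq (1 - z * (t : ℂ)) : ℂ) ≠ 0 := by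
      exact_mod_cast (Complex.normSq_pos.2 h1).ne'
    have h3 := Complex.mul_conj (1 - z * (t : ℂ))
    have h4 : (starRingEnd ℂ) (1 - z * (t : ℂ)) = 1 - (starRingEnd ℂ) z * t := by simp
    rw [h4] at h3
    simp only [hw]
    push_cast
    field_simp
    rw [← h3]; ring
  have hB : 1 + psiP μ z = (a : ℂ) - (starRingEnd ℂ) z * b := by
    rw [psi_add_one h hzS, add_sub_cancel]
    simp_rw [hinv]
    rw [integral_sub, integral_const_mul, integral_complex_ofReal, integral_complex_ofReal]
    · exact hIw.ofReal
    · exact hIt.ofReal.const_mul _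
  have hA : psiP μ z = z * b - z * (starRingEnd ℂ) z * c := by
    have : ∀ t : ℝ, (z * (t : ℂ)) / (1 - z * (t : ℂ)) =
      z * ((t * w t : ℝ) : ℂ) - z * (starRingEnd ℂ) z * ((t ^ 2 * w t : ℝ) : ℂ) := by
      intro t
      rw [div_eq_mul_one_div, hinv]; push_cast; ring
    rw [psiP]
    simp_rw [this]
    rw [integral_sub, integral_const_mul, integral_const_mul, integral_complex_ofReal, integral_complex_ofReal]
    · exact hIt.ofReal.const_mul _
    · exact hIt2.ofReal.const_mul _
  have hD : 1 + psiP μ z ≠ 0 := by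
    intro h0
    rw [hB] at h0
    have := congrArg Complex.im h0
    simp at this
    rcases this with h1 | h1
    · exact hz.ne' h1
    · exact hbpos.ne' h1
  set D := Complex.normSq (1 + psiP μ z) with hDdef
  have hDpos : 0 < D := Complex.normSq_pos.2 hD
  have heta : etaP μ z = psiP μ z * (starRingEnd ℂ) (1 + psiP μ z) * ((1 / D : ℝ) : ℂ) := by
    rw [etaP, div_eq_mul_inv, Complex.inv_def]
    push_cast; rw [← hDdef]; ring
  have him1 : (etaP μ z).im = z.im * b / D := by
    rw [heta, Complex.im_mul_ofReal]
    have e1 : (psiP μ z * (starRingEnd ℂ) (1 + psiP μ z)).im = (psiP μ z).im := by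
      simp [Complex.mul_im]; ring
    rw [e1, hA, Complex.mul_conj]
    simp [← Complex.ofReal_mul]
    ring
  have him2 : (etaP μ z * (starRingEnd ℂ) z).im =
      Complex.normSq z * z.im * (a * c - b ^ 2) / D := by
    have e1 : etaP μ z * (starRingEnd ℂ) z =
       ((Complex.normSq z / D : ℝ) : ℂ) *
        (((b : ℂ) - (starRingEnd ℂ) z * c) * ((a : ℂ) - z * b)) := by
      rw [heta, hB, hA]
      push_cast
      rw [← Complex.mul_conj z]
      simp
      ring
    rw [e1, Complex.im_ofReal_mul]
    simp
    ring
  have hcs : ∫ t, (t - b / a) ^ 2 * w t ∂μ = (a * c - b ^ 2) / a := by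
    have e : ∀ t, (t - b / a) ^ 2 * w t = t ^ 2 * w t - (2 * (b / a)) * (t * w t)
      + (b / a) ^ 2 * w t := fun t => by ring
    simp_rw [e]
    rw [integral_add, integral_sub, integral_const_mul, integral_const_mul, ← ha, ← hb, ← hc]
    · field_simp; ring
    · exact hIt2
    · exact hIt.const_mul _
    · exact hIt2.sub (hIt.const_mul _)
    · exact hIw.const_mul _
  have hcsI : Integrable (fun t => (t - b / a) ^ 2 * w t) μ := by
    have e : (fun t => (t - b / a) ^ 2 * w t) = fun t => t ^ 2 * w t - (2 * (b / a)) * (t * w t)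
      + (b / a) ^ 2 * w t := by ext t; ring
    rw [e]
    exact (hIt2.sub (hIt.const_mul _)).add (hIw.const_mul _)
  have hnn : 0 ≤ fun t => (t - b / a) ^ 2 * w t := fun t => mul_nonneg (sq_nonneg _) (hwpos t).le
  have hacb : 0 ≤ a * c - b ^ 2 := by
    have := integral_nonneg (μ := μ) hnn
    rw [hcs] at this
    rwa [le_div_iff₀ hapos, zero_mul] at this
  have hzn : 0 < Complex.normSq z := Complex.normSq_pos.2 (norm_pos_iff.1 hz0)
  refine ⟨by rw [him1]; positivity, by rw [him2]; positivity, fun h0 => ⟨b / a, ?_⟩⟩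
  rw [him2] at h0
  have h1 : a * c - b ^ 2 = 0 := by
    simpa [hDpos.ne', hzn.ne', hz.ne', norm_pos_iff.1 hz0] using h0
  rw [h1, zero_div, integral_eq_zero_iff_of_nonneg hnn hcsI] at hcs
  apply eq_dirac_of_ae
  filter_upwards [hcs] with t ht
  have : (t - b / a) ^ 2 = 0 := by simpa only [Pi.zero_apply, mul_eq_zero, (hwpos t).ne', or_false] using ht
  linarith [pow_eq_zero_iff (two_ne_zero) |>.1 this]

lemma eta_tendsto {μ : Measure ℝ} [IsProbabilityMeasure μ] (h : μ (Set.Iio 0) = 0) :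
    Tendsto (fun x : ℝ => etaP μ (Complex.ofReal x)) (𝓝[<] (0:ℝ)) (𝓝 0) := by
  have hψ : Tendsto (fun x : ℝ => psiP μ (Complex.ofReal x)) (𝓝[<] (0:ℝ)) (𝓝 0) := by
    have h0 : (0 : ℂ) = ∫ _t : ℝ, (0 : ℂ) ∂μ := by simp
    rw [h0]
    unfold psiP
    apply tendsto_integral_filter_of_dominated_convergence (fun _ => (1:ℝ))
    · exact Eventually.of_forall fun x => Measurable.aestronglyMeasurable (by fun_prop)
    · filter_upwards [self_mem_nhdsWithin] with x hx
      filter_upwards [ae_nonneg_of h] with t ht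
      have hx' : x < 0 := hx
      have e : ((x : ℂ) * t) / (1 - x * t) = ((x * t / (1 - x * t) : ℝ) : ℂ) := by push_cast; rfl
      rw [e, Complex.norm_real, Real.norm_eq_abs, abs_div, div_le_one]
      · have : x * t ≤ 0 := mul_nonpos_of_nonpos_of_nonneg hx'.le ht
        rw [abs_of_nonpos this, abs_of_nonneg (by linarith)]; linarith
      · apply abs_pos.2; nlinarith
    · exact integrable_const _
    · filter_upwards with t
      have : ContinuousAt (fun x : ℝ => ((x : ℂ) * t) / (1 - x * t)) 0 := by
        apply ContinuousAt.div <;> first | fun_prop | simp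
      have := this.tendsto
      simp only [Complex.ofReal_zero, zero_mul, zero_div] at this
      exact this.mono_left nhdsWithin_le_nhds
  have := hψ.div (tendsto_const_nhds (x := (1:ℂ)).add hψ) (by simp)
  simp only [zero_div] at this
  exact this

lemma dirac_arg (c : ℝ) (h : (Measure.dirac c) (Set.Iio (0:ℝ)) = 0)
    (h0 : Measure.dirac c ≠ Measure.dirac (0:ℝ)) : ∃ z : ℂ, 0 < z.im ∧ (etaP (Measure.dirac c) z).arg = z.arg := by
  have hc : 0 < c := by
    refine lt_of_le_of_ne ?_ (by rintro rfl; exact h0 rfl)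
    by_contra! hlt
    rw [Measure.dirac_apply' _ measurableSet_Iio] at h
    simp [hlt] at h
  refine ⟨Complex.I, by simp, ?_⟩
  have hne : 1 - Complex.I * (c : ℂ) ≠ 0 := by
    intro h0; simpa using congrArg Complex.re h0
  have : etaP (Measure.dirac c) Complex.I = c * Complex.I := by
    rw [etaP, psiP, integral_dirac]
    field_simp
    ring
  rw [this, Complex.arg_real_mul _ hc]

lemma schwarz_formula {g : ℂ → ℂ} (hg : DiffContOnCl ℂ g (Metric.ball 0 1)) {ζ : ℂ}
    (hζ : ‖ζ‖ < 1) :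
    g ζ + (starRingEnd ℂ) (g 0) =
      Real.circleAverage (fun e => (((g e).re : ℝ) : ℂ) * (2 * e / (e - ζ))) 0 1 := by
  have hg' : DiffContOnCl ℂ g (Metric.ball 0 |1|) := by simpa using hg
  have hcl : closure (Metric.ball (0:ℂ) 1) = Metric.closedBall 0 1 := closure_ball _ one_ne_zero
  have hgc : ContinuousOn g (Metric.sphere 0 1) :=
    hg.continuousOn.mono (by rw [hcl]; exact Metric.sphere_subset_closedBall)
  have hne : ∀ e ∈ Metric.sphere (0:ℂ) 1, e - ζ ≠ 0 := by
    intro e he h0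
    rw [sub_eq_zero.1 h0] at he
    simp at he
    linarith
  have h1 := hg'.circleAverage_smul_div (w := ζ) (by simpa using hζ)
  have hden : ∀ z ∈ Metric.closedBall (0:ℂ) 1, 1 - (starRingEnd ℂ) ζ * z ≠ 0 := by
    intro z hz h0
    have : ‖(starRingEnd ℂ) ζ * z‖ = 1 := by rw [← sub_eq_zero.1 h0]; simp
    rw [norm_mul, Complex.norm_conj] at this
    have hz' : ‖z‖ ≤ 1 := by simpa using hz
    nlinarith [norm_nonneg ζ, norm_nonneg z]
  have hh : DiffContOnCl ℂ (fun z => (1 - (starRingEnd ℂ) ζ * z)⁻¹ • g z) (Metric.ball 0 |1|) := by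
    apply DiffContOnCl.smul _ hg'
    rw [abs_one]
    apply DiffContOnCl.inv
    · apply Differentiable.diffContOnCl; fun_prop
    · intro z hz; rw [hcl] at hz; exact hden z hz
  have h2 := hh.circleAverage
  have h3 := congrArg (starRingEnd ℂ) h2
  have hcc : ContinuousOn (fun z => (1 - (starRingEnd ℂ) ζ * z)⁻¹ • g z) (Metric.sphere 0 1) := by
    apply ContinuousOn.fun_smul _ hgc
    apply ContinuousOn.inv₀ (by fun_prop)
    intro z hz; exact hden z (Metric.sphere_subset_closedBall hz)
  have h4 := ContinuousLinearMap.circleAverage_comp_comm (c := 0) (R := 1)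
    (Complex.conjCLE : ℂ →L[ℝ] ℂ) (hcc.circleIntegrable zero_le_one)
  have h5 : Real.circleAverage ((Complex.conjCLE : ℂ →L[ℝ] ℂ) ∘
      fun z => (1 - (starRingEnd ℂ) ζ * z)⁻¹ • g z) 0 1 =
      Real.circleAverage (fun e => (e / (e - ζ)) * (starRingEnd ℂ) (g e)) 0 1 := by
    apply Real.circleAverage_congr_sphere
    intro e he
    rw [abs_one] at he
    have he1 : ‖e‖ = 1 := by simpa using he
    have hee : e * (starRingEnd ℂ) e = 1 := by
      rw [Complex.mul_conj, Complex.normSq_eq_norm_sq, he1]; simp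
    have hn := hne e he
    have he0 : e ≠ 0 := by rintro rfl; simp at he1
    simp only [Function.comp_apply, smul_eq_mul]
    change (starRingEnd ℂ) _ = _
    simp only [map_mul, map_inv₀, map_sub, map_one, Complex.conj_conj]
    congr 1
    have : (starRingEnd ℂ) e = e⁻¹ := eq_inv_of_mul_eq_one_right hee
    rw [this, eq_div_iff hn]
    have : 1 - ζ * e⁻¹ = (e - ζ) * e⁻¹ := by field_simp
    rw [this]
    field_simp
  rw [h5, h2] at h4
  have h6 : (starRingEnd ℂ) (g 0) =
      Real.circleAverage (fun e => (e / (e - ζ)) * (starRingEnd ℂ) (g e)) 0 1 := by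
    rw [h4]
    change _ = (starRingEnd ℂ) _
    simp
  rw [h6, ← h1, ← Real.circleAverage_fun_add]
  · congr 1
    ext e
    have := Complex.add_conj (g e)
    simp only [sub_zero, smul_eq_mul]
    rw [← mul_add, this]
    push_cast; ring
  · apply ContinuousOn.circleIntegrable zero_le_one
    apply ContinuousOn.fun_smul _ hgc
    apply ContinuousOn.div (by fun_prop) (by fun_prop) hne
  · apply ContinuousOn.circleIntegrable zero_le_one
    apply ContinuousOn.mul
    · apply ContinuousOn.div (by fun_prop) (by fun_prop) hne
    · exact Complex.continuous_conj.comp_continuousOn hgc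

/-- The point `e^{iθ}`. -/
noncomputable def ePt (θ : ℝ) : ℂ := circleMap 0 1 θ

lemma ePt_norm (θ : ℝ) : ‖ePt θ‖ = 1 := by simp [ePt]

lemma ePt_cont : Continuous ePt := continuous_circleMap 0 1

lemma ePt_sub_ne {ζ : ℂ} (hζ : ‖ζ‖ < 1) (θ : ℝ) : ePt θ - ζ ≠ 0 := by
  intro h0
  have := ePt_norm θ
  rw [sub_eq_zero.1 h0] at this
  linarith

/-- Herglotz kernel. -/
noncomputable def hk (ζ : ℂ) (θ : ℝ) : ℂ := (ePt θ + ζ) / (ePt θ - ζ)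

lemma hk_cont {ζ : ℂ} (hζ : ‖ζ‖ < 1) : Continuous (hk ζ) :=
  (ePt_cont.add continuous_const).div (ePt_cont.sub continuous_const) (ePt_sub_ne hζ)

lemma hk_bound {ζ : ℂ} (hζ : ‖ζ‖ < 1) (θ : ℝ) : ‖hk ζ θ‖ ≤ 2 / (1 - ‖ζ‖) := by
  rw [hk, norm_div]
  have h1 := norm_add_le (ePt θ) ζ
  have h2 := norm_sub_norm_le (ePt θ) ζ
  rw [ePt_norm] at h1 h2
  have : 0 < 1 - ‖ζ‖ := by linarith
  apply div_le_div₀ (by norm_num) (by linarith) this h2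

/-- The bounded continuous Herglotz kernel. -/
noncomputable def hkB {ζ : ℂ} (hζ : ‖ζ‖ < 1) : BoundedContinuousFunction ℝ ℂ :=
  BoundedContinuousFunction.ofNormedAddCommGroup (hk ζ) (hk_cont hζ) _ (hk_bound hζ)

lemma herglotz_closed {g : ℂ → ℂ} (hg : DiffContOnCl ℂ g (Metric.ball 0 1))
    (hpos : ∀ ζ, ‖ζ‖ ≤ 1 → 0 ≤ (g ζ).re) (him : (g 0).im = 0) :
    ∃ ν : Measure ℝ, IsFiniteMeasure ν ∧ ν (Set.Icc 0 (2 * Real.pi))ᶜ = 0 ∧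
      ∀ ζ : ℂ, ‖ζ‖ < 1 → g ζ = ∫ θ, hk ζ θ ∂ν := by
  have hcl : closure (Metric.ball (0:ℂ) 1) = Metric.closedBall 0 1 := closure_ball _ one_ne_zero
  have hgc : ContinuousOn g (Metric.sphere 0 1) :=
    hg.continuousOn.mono (by rw [hcl]; exact Metric.sphere_subset_closedBall)
  have hgE : Continuous (fun θ => (g (ePt θ)).re) := by
    apply Complex.continuous_re.comp
    apply hgc.comp_continuous ePt_cont
    intro θ; simp [ePt_norm]
  set d : ℝ → ℝ := fun θ => (2 * Real.pi)⁻¹ * (g (ePt θ)).re with hd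
  have hdc : Continuous d := by fun_prop
  have hd0 : ∀ θ, 0 ≤ d θ := fun θ =>
    mul_nonneg (by positivity) (hpos _ (ePt_norm θ).le)
  have hpi : (0:ℝ) ≤ 2 * Real.pi := by positivity
  set ν0 : Measure ℝ := volume.restrict (Set.Ioc 0 (2 * Real.pi)) with hν0
  have hint : Integrable d ν0 := by
    have := hdc.intervalIntegrable (μ := volume) 0 (2 * Real.pi)
    rwa [intervalIntegrable_iff_integrableOn_Ioc_of_le hpi] at this
  have key : ∀ F : ℝ → ℂ, ∫ θ, F θ ∂(ν0.withDensity fun θ => ENNReal.ofReal (d θ)) =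
      (2 * Real.pi)⁻¹ • ∫ θ in (0:ℝ)..(2 * Real.pi), (((g (ePt θ)).re : ℝ) : ℂ) * F θ := by
    intro F
    rw [integral_withDensity_eq_integral_toReal_smul (by fun_prop)
      (Eventually.of_forall fun _ => ENNReal.ofReal_lt_top),
      intervalIntegral.integral_of_le hpi, ← integral_smul]
    apply integral_congr_ae
    filter_upwards with θ
    simp only [ENNReal.toReal_ofReal (hd0 θ)]
    simp only [hd, Complex.real_smul]
    push_cast
    ring
  have hfin : IsFiniteMeasure (ν0.withDensity fun θ => ENNReal.ofReal (d θ)) :=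
    isFiniteMeasure_withDensity_ofReal hint.2
  have hs : ∀ ζ : ℂ, ‖ζ‖ < 1 → g ζ + (starRingEnd ℂ) (g 0) =
      ∫ θ, (hk ζ θ + 1) ∂(ν0.withDensity fun θ => ENNReal.ofReal (d θ)) := by
    intro ζ hζ
    rw [schwarz_formula hg hζ, key, Real.circleAverage_def]
    congr 1
    apply intervalIntegral.integral_congr
    intro θ _
    have := ePt_sub_ne hζ θ
    simp only [hk]
    change (((g (ePt θ)).re : ℝ) : ℂ) * (2 * ePt θ / (ePt θ - ζ)) = _
    congr 1
    field_simp
    ring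
  have hg0 : (starRingEnd ℂ) (g 0) = g 0 := Complex.conj_eq_iff_im.2 him
  have hI : ∀ ζ : ℂ, ‖ζ‖ < 1 →
      Integrable (hk ζ) (ν0.withDensity fun θ => ENNReal.ofReal (d θ)) := by
    intro ζ hζ
    exact Integrable.of_bound (hk_cont hζ).aestronglyMeasurable _ (Eventually.of_forall (hk_bound hζ))
  have h1 : g 0 = ∫ _θ, (1:ℂ) ∂(ν0.withDensity fun θ => ENNReal.ofReal (d θ)) := by
    have h2 := hs 0 (by simp)
    rw [integral_add (hI 0 (by simp)) (integrable_const _), hg0] at h2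
    have h3 : hk 0 = fun _ => 1 := by
      ext θ
      have : ePt θ ≠ 0 := by
        have := ePt_sub_ne (ζ := 0) (by simp) θ
        simpa using this
      simp [hk, this]
    rw [h3] at h2
    linear_combination h2 / 2
  refine ⟨ν0.withDensity fun θ => ENNReal.ofReal (d θ), hfin, ?_, ?_⟩
  · apply withDensity_absolutelyContinuous
    rw [hν0, Measure.restrict_apply measurableSet_Icc.compl]
    convert measure_empty (μ := volume)
    ext x
    simp only [Set.mem_inter_iff, Set.mem_compl_iff, Set.mem_Icc, Set.mem_Ioc, Set.mem_empty_iff_false, iff_false]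
    rintro ⟨h, h1, h2⟩
    exact h ⟨h1.le, h2⟩
  · intro ζ hζ
    have h2 := hs ζ hζ
    rw [integral_add (hI ζ hζ) (integrable_const _), ← h1, hg0] at h2
    exact add_right_cancel h2

lemma herglotz {f : ℂ → ℂ} (hf : DifferentiableOn ℂ f (Metric.ball 0 1))
    (hpos : ∀ ζ, ‖ζ‖ < 1 → 0 ≤ (f ζ).re) (him : (f 0).im = 0) :
    ∃ ν : Measure ℝ, IsFiniteMeasure ν ∧ 
      ∀ ζ : ℂ, ‖ζ‖ < 1 → f ζ = ∫ θ, hk ζ θ ∂ν := by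
  set r : ℕ → ℝ := fun n => 1 - 1 / ((n : ℝ) + 2) with hr
  have hr0 : ∀ n, 0 ≤ r n := by
    intro n
    have : 1 / ((n : ℝ) + 2) ≤ 1 := by
      rw [div_le_one (by positivity)]; linarith [(Nat.cast_nonneg n : (0:ℝ) ≤ n)]
    simp only [hr]; linarith
  have hr1 : ∀ n, r n < 1 := by
    intro n
    have : 0 < 1 / ((n : ℝ) + 2) := by positivity
    simp only [hr]; linarith
  have hrt : Tendsto r atTop (𝓝 1) := by
    have : Tendsto (fun n : ℕ => 1 / ((n : ℝ) + 2)) atTop (𝓝 0) := by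
      simp_rw [one_div]
      exact (tendsto_natCast_atTop_atTop.atTop_add tendsto_const_nhds).inv_tendsto_atTop
    simpa [hr] using tendsto_const_nhds (x := (1:ℝ)).sub this
  have hn : ∀ n ζ, ‖ζ‖ ≤ 1 → ‖(r n : ℂ) * ζ‖ < 1 := by
    intro n ζ hζ
    rw [norm_mul, Complex.norm_of_nonneg (hr0 n)]
    nlinarith [hr0 n, hr1 n, norm_nonneg ζ]
  have hex : ∀ n, ∃ ν : Measure ℝ, IsFiniteMeasure ν ∧ ν (Set.Icc 0 (2 * Real.pi))ᶜ = 0 ∧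
      ∀ ζ : ℂ, ‖ζ‖ < 1 → f (r n * ζ) = ∫ θ, hk ζ θ ∂ν := by
    intro n
    apply herglotz_closed (g := fun ζ => f (r n * ζ))
    · apply DifferentiableOn.diffContOnCl
      apply hf.comp (by fun_prop)
      rw [closure_ball _ one_ne_zero]
      intro ζ hζ
      have := hn n ζ (by simpa using hζ)
      simpa using this
    · intro ζ hζ; exact hpos _ (hn n ζ hζ)
    · simpa using him
  choose ν hνf hνs hνi using hex
  have hk0 : hk 0 = fun _ => 1 := by
    ext θ
    have : ePt θ ≠ 0 := by
      have := ePt_sub_ne (ζ := 0) (by simp) θ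
      simpa using this
    simp [hk, this]
  have hmass : ∀ n, (ν n).real Set.univ = (f 0).re := by
    intro n
    have := hνi n 0 (by simp)
    rw [hk0] at this
    simp at this
    rw [this]; simp
  let N : ℕ → FiniteMeasure ℝ := fun n => ⟨ν n, hνf n⟩
  have hcomp := isCompact_setOfPred_finiteMeasure_le_of_isCompact (f 0).re.toNNReal
    (isCompact_Icc (a := (0:ℝ)) (b := 2 * Real.pi))
  have hmem : ∀ n, N n ∈ {μ : FiniteMeasure ℝ | μ.mass ≤ (f 0).re.toNNReal ∧
      μ (Set.Icc 0 (2 * Real.pi))ᶜ = 0} := by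
    intro n
    refine ⟨?_, ?_⟩
    · rw [← hmass n]
      apply le_of_eq
      rw [← NNReal.coe_inj, Real.coe_toNNReal _ measureReal_nonneg]
      rfl
    · have := hνs n
      change ENNReal.toNNReal _ = 0
      rw [show ((N n : FiniteMeasure ℝ) : Measure ℝ) = ν n from rfl, this]; rfl
  let U : Ultrafilter ℕ := Ultrafilter.of atTop
  have hU : (U : Filter ℕ) ≤ atTop := Ultrafilter.of_le _
  obtain ⟨M, -, hM⟩ := isCompact_iff_ultrafilter_le_nhds'.1 hcomp (U.map N)
    (Filter.mem_map.2 (Filter.univ_mem' hmem))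
  have hM' : Tendsto N U (𝓝 M) := hM
  rw [FiniteMeasure.tendsto_iff_forall_integral_rclike_tendsto ℂ] at hM'
  refine ⟨(M : Measure ℝ), inferInstance, fun ζ hζ => ?_⟩
  have h1 := hM' (hkB hζ)
  have h2 : Tendsto (fun n => f (r n * ζ)) U (𝓝 (f ζ)) := by
    have hc : ContinuousAt f ζ :=
      (hf.differentiableAt (Metric.isOpen_ball.mem_nhds (by simpa using hζ))).continuousAt
    have h3 : Tendsto (fun n => (r n : ℂ) * ζ) U (𝓝 ζ) := by
      have : Tendsto (fun n => (r n : ℂ)) U (𝓝 1) := by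
        have := (Complex.continuous_ofReal.tendsto 1).comp (hrt.mono_left hU)
        simpa [Function.comp_def] using this
      simpa using this.mul_const ζ
    exact hc.tendsto.comp h3
  refine tendsto_nhds_unique h2 ?_
  exact h1.congr fun n => (hνi n ζ hζ).symm

lemma F_props {η : ℂ → ℂ} (hηd : DifferentiableOn ℂ η SlitP)
    (hη0 : ∀ z ∈ SlitP, η z ≠ 0)
    (hηconj : ∀ z ∈ SlitP, η ((starRingEnd ℂ) z) = (starRingEnd ℂ) (η z))
    (harg : ∀ z : ℂ, 0 < z.im → z.arg ≤ (η z).arg ∧ (η z).arg < Real.pi) :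
    (∀ z ∈ SlitP, 1 - η z ≠ 0) ∧
    ∀ s : ℂ, 0 < s.re → 0 ≤ (s * (1 / (1 - η (-s ^ 2)))).re := by
  have him : ∀ z : ℂ, 0 < z.im → 0 < (η z).im ∧ 0 ≤ (η z * (starRingEnd ℂ) z).im := by
    intro z hz
    have h1 := arg_pos_of_im_pos hz
    have h2 := harg z hz
    have h3 := im_pos_of_arg (h1.1.trans_le h2.1) h2.2
    exact ⟨h3, (arg_le_iff_im hz h3).1 h2.1⟩
  -- on the negative axis
  have hneg : ∀ x : ℝ, x < 0 → (η x).im = 0 ∧ (η x).re ≤ 0 := by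
    intro x hx
    have hxS : (x : ℂ) ∈ SlitP := Or.inl (by simpa using hx)
    constructor
    · have := hηconj x hxS
      rw [Complex.conj_ofReal] at this
      exact Complex.conj_eq_iff_im.1 this.symm
    · have hopen : IsOpen SlitP := by
        have : SlitP = {z : ℂ | z.re < 0} ∪ {z : ℂ | z.im ≠ 0} := rfl
        rw [this]
        exact (isOpen_lt Complex.continuous_re continuous_const).union
          (isOpen_ne_fun Complex.continuous_im continuous_const)
      have hc : ContinuousAt η x := (hηd.differentiableAt (hopen.mem_nhds hxS)).continuousAt
      have ht : Tendsto (fun y : ℝ => (x : ℂ) + y * Complex.I) (𝓝[>] 0) (𝓝 (x : ℂ)) := by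
        have : Continuous (fun y : ℝ => (x : ℂ) + y * Complex.I) := by fun_prop
        have := this.tendsto 0
        simp only [Complex.ofReal_zero, zero_mul, add_zero] at this
        exact this.mono_left nhdsWithin_le_nhds
      have h2 := (Complex.continuous_re.tendsto _).comp (hc.tendsto.comp ht)
      refine le_of_tendsto h2 ?_
      filter_upwards [self_mem_nhdsWithin] with y hy
      have hy' : 0 < y := hy
      have hz : 0 < ((x : ℂ) + y * Complex.I).im := by simpa using hy'
      obtain ⟨h3, h4⟩ := him _ hz
      simp only [Complex.mul_im, Complex.conj_re, Complex.conj_im] at h4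
      simp at h4 h3
      simp only [Function.comp_apply]
      nlinarith
  have hconjS : ∀ z ∈ SlitP, (starRingEnd ℂ) z ∈ SlitP := by
    rintro z (h | h)
    · left; simpa using h
    · right; simpa using h
  have hone : ∀ z ∈ SlitP, 1 - η z ≠ 0 := by
    intro z hz h0
    have h1 : η z = 1 := (sub_eq_zero.1 h0).symm
    rcases lt_trichotomy z.im 0 with h | h | h
    · have h2 := (him ((starRingEnd ℂ) z) (by simpa using h)).1
      rw [hηconj z hz, h1] at h2
      simp at h2
    · have hzr : z = (z.re : ℂ) := by apply Complex.ext <;> simp [h]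
      have hre : z.re < 0 := by
        rcases hz with hz | hz
        · exact hz
        · exact absurd h hz
      have h2 := (hneg z.re hre).2
      rw [← hzr, h1] at h2
      simp at h2
      linarith
    · have h2 := (him z h).1
      rw [h1] at h2
      simp at h2
  refine ⟨hone, ?_⟩
  have hpos1 : ∀ s : ℂ, 0 < s.re → s.im < 0 → 0 ≤ (s * (1 / (1 - η (-s ^ 2)))).re := by
    intro s hs hs2
    have hz : 0 < (-s ^ 2).im := by
      simp [pow_two]; nlinarith
    obtain ⟨h1, h2⟩ := him _ hz
    set e := η (-s ^ 2) with he
    have hne : 1 - e ≠ 0 := hone _ (Or.inr hz.ne')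
    have hn : 0 < Complex.normSq (1 - e) := Complex.normSq_pos.2 hne
    have : s * (1 / (1 - e)) = ((1 / Complex.normSq (1 - e) : ℝ) : ℂ) *
        (s * (1 - (starRingEnd ℂ) e)) := by
      rw [one_div, Complex.inv_def]; push_cast; simp; ring
    rw [this, Complex.re_ofReal_mul]
    apply mul_nonneg (by positivity)
    simp [pow_two] at h2 ⊢
    -- h2 : Im(e * conj(-s^2)) ≥ 0
    have hk : 0 ≤ (-2 * s.im) * (s.re * (1 - e.re) - s.im * e.im) := by
      nlinarith [mul_pos hs (neg_pos.2 hs2), mul_nonneg h1.le (add_nonneg (sq_nonneg s.re) (sq_nonneg s.im))]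
    have := nonneg_of_mul_nonneg_right hk (by linarith)
    linarith
  intro s hs
  rcases lt_trichotomy s.im 0 with h | h | h
  · exact hpos1 s hs h
  · have hsr : s = (s.re : ℂ) := by apply Complex.ext <;> simp [h]
    have e1 : -s ^ 2 = ((-s.re ^ 2 : ℝ) : ℂ) := by
      push_cast; rw [← hsr]
    obtain ⟨h1, h2⟩ := hneg (-s.re ^ 2) (by nlinarith)
    rw [e1]
    set e := η ((-s.re ^ 2 : ℝ) : ℂ) with he
    have her : e = (e.re : ℂ) := by apply Complex.ext <;> simp [h1]
    rw [hsr, her]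
    have : ((s.re : ℂ) * (1 / (1 - (e.re : ℂ)))) = ((s.re * (1 / (1 - e.re)) : ℝ) : ℂ) := by
      push_cast; rfl
    rw [this, Complex.ofReal_re]
    have : 0 < 1 - e.re := by linarith
    positivity
  · have h1 := hpos1 ((starRingEnd ℂ) s) (by simpa using hs) (by simpa using h)
    have hz : -s ^ 2 ∈ SlitP := by
      right; simp [pow_two]
      intro h0; nlinarith
    have e1 : -((starRingEnd ℂ) s) ^ 2 = (starRingEnd ℂ) (-s ^ 2) := by simp
    rw [e1, hηconj _ hz] at h1
    have e2 : (starRingEnd ℂ) s * (1 / (1 - (starRingEnd ℂ) (η (-s ^ 2)))) =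
      (starRingEnd ℂ) (s * (1 / (1 - η (-s ^ 2)))) := by simp
    rw [e2, Complex.conj_re] at h1
    exact h1

lemma neg_sq_mem {s : ℂ} (hs : 0 < s.re) : -s ^ 2 ∈ SlitP := by
  by_cases h : s.im = 0
  · left; simp [pow_two, h]; exact hs.ne'
  · right; simp [pow_two]
    intro h0
    have : s.re * s.im = 0 := by linarith
    rcases mul_eq_zero.1 this with h1 | h1
    · exact hs.ne' h1
    · exact h h1

lemma exists_sqrt {z : ℂ} (hz : z ∈ SlitP) : ∃ s : ℂ, 0 < s.re ∧ -s ^ 2 = z := by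
  obtain ⟨s, hs⟩ := IsAlgClosed.exists_pow_nat_eq (-z) two_pos
  have hz' : z = -s ^ 2 := by rw [hs]; ring
  rcases lt_trichotomy s.re 0 with h | h | h
  · exact ⟨-s, by simpa using h, by rw [hz']; ring⟩
  · exfalso
    rw [hz'] at hz
    rcases hz with hz | hz
    · simp [pow_two, h] at hz
      nlinarith
    · simp [pow_two, h] at hz
  · exact ⟨s, h, hz'.symm⟩

/-- Cayley transform. -/
noncomputable def cay (s : ℂ) : ℂ := (1 - s) / (1 + s)

lemma one_add_ne {s : ℂ} (hs : 0 < s.re) : 1 + s ≠ 0 := by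
  intro h
  have := congrArg Complex.re h
  simp at this
  linarith

lemma cay_norm {s : ℂ} (hs : 0 < s.re) : ‖cay s‖ < 1 := by
  rw [cay, norm_div, div_lt_one (norm_pos_iff.2 (one_add_ne hs))]
  apply lt_of_pow_lt_pow_left₀ 2 (norm_nonneg _)
  rw [← Complex.normSq_eq_norm_sq, ← Complex.normSq_eq_norm_sq, Complex.normSq_apply,
    Complex.normSq_apply]
  simp
  nlinarith

lemma cay_cay {s : ℂ} (hs : 0 < s.re) : cay (cay s) = s := by
  have := one_add_ne hs
  have h2 : 1 + cay s ≠ 0 := by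
    rw [cay]
    have : 1 + (1 - s) / (1 + s) = 2 / (1 + s) := by field_simp; ring
    rw [this]
    exact div_ne_zero two_ne_zero (one_add_ne hs)
  rw [cay, div_eq_iff h2, cay]
  field_simp
  ring

lemma one_add_ne' {ζ : ℂ} (h : ‖ζ‖ < 1) : 1 + ζ ≠ 0 := by
  intro h0
  have : ζ = -1 := by linear_combination h0
  rw [this] at h
  simp at h

lemma cay_re {ζ : ℂ} (h : ‖ζ‖ < 1) : 0 < (cay ζ).re := by
  have h1 : Complex.normSq ζ < 1 := by
    rw [Complex.normSq_eq_norm_sq]; nlinarith [norm_nonneg ζ]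
  have h2 : 0 < Complex.normSq (1 + ζ) := Complex.normSq_pos.2 (one_add_ne' h)
  have : cay ζ = ((1 / Complex.normSq (1 + ζ) : ℝ) : ℂ) * ((1 - ζ) * (1 + (starRingEnd ℂ) ζ)) := by
    rw [cay, div_eq_mul_inv, Complex.inv_def]; push_cast; simp; ring
  rw [this, Complex.re_ofReal_mul]
  apply mul_pos (by positivity)
  rw [Complex.normSq_apply] at h1
  simp
  nlinarith

lemma kernel_sym {s : ℂ} (hs : 0 < s.re) (θ : ℝ) :
    (1 / 2) * (hk (cay s) θ + (starRingEnd ℂ) (hk ((starRingEnd ℂ) (cay s)) θ)) =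
      s * (2 / ((1 - Real.cos θ) - (-s ^ 2) * (1 + Real.cos θ))) ∧
    ((1 - Real.cos θ : ℂ) - (-s ^ 2) * (1 + Real.cos θ)) ≠ 0 := by
  have hn := cay_norm hs
  set ζ := cay s with hζ
  have h1 := ePt_sub_ne hn θ
  have h2 := ePt_sub_ne (ζ := (starRingEnd ℂ) ζ) (by rwa [Complex.norm_conj]) θ
  have h3 : (starRingEnd ℂ) (ePt θ) - ζ ≠ 0 := by
    intro h0
    apply h2
    have := congrArg (starRingEnd ℂ) h0
    simpa using this
  have hs1 := one_add_ne hs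
  have hee : ePt θ * (starRingEnd ℂ) (ePt θ) = 1 := by
    rw [Complex.mul_conj, Complex.normSq_eq_norm_sq, ePt_norm]; simp
  have hsum : ePt θ + (starRingEnd ℂ) (ePt θ) = 2 * Real.cos θ := by
    rw [Complex.add_conj]
    have : (ePt θ).re = Real.cos θ := by
      simp [ePt, circleMap, Complex.exp_re]
    rw [this]; push_cast; ring
  have hprod : (ePt θ - ζ) * ((starRingEnd ℂ) (ePt θ) - ζ) = 1 - 2 * Real.cos θ * ζ + ζ ^ 2 := by
    linear_combination hee - ζ * hsum
  have hD : (1 + s) ^ 2 * ((ePt θ - ζ) * ((starRingEnd ℂ) (ePt θ) - ζ)) =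
      2 * ((1 - Real.cos θ : ℂ) - (-s ^ 2) * (1 + Real.cos θ)) := by
    rw [hprod, hζ, cay]
    field_simp
    ring
  have hDne : ((1 - Real.cos θ : ℂ) - (-s ^ 2) * (1 + Real.cos θ)) ≠ 0 := by
    intro h0
    rw [h0, mul_zero] at hD
    exact (mul_ne_zero (pow_ne_zero 2 hs1) (mul_ne_zero h1 h3)) hD
  refine ⟨?_, hDne⟩
  have e1 : (starRingEnd ℂ) (hk ((starRingEnd ℂ) ζ) θ) =
      ((starRingEnd ℂ) (ePt θ) + ζ) / ((starRingEnd ℂ) (ePt θ) - ζ) := by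
    simp [hk]
  rw [e1, hk]
  have e2 : (1 / 2 : ℂ) * ((ePt θ + ζ) / (ePt θ - ζ) +
      ((starRingEnd ℂ) (ePt θ) + ζ) / ((starRingEnd ℂ) (ePt θ) - ζ)) =
      (1 - ζ ^ 2) / ((ePt θ - ζ) * ((starRingEnd ℂ) (ePt θ) - ζ)) := by
    field_simp
    linear_combination 2 * hee
  rw [e2]
  have e3 : (1 - ζ ^ 2) * (1 + s) ^ 2 = 4 * s := by
    rw [hζ, cay]; field_simp; ring
  rw [← mul_div_assoc, div_eq_div_iff (mul_ne_zero h1 h3) hDne]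
  have h4 : (1 + s) ^ 2 ≠ 0 := pow_ne_zero 2 hs1
  apply mul_left_cancel₀ h4
  linear_combination ((1 - Real.cos θ : ℂ) - (-s ^ 2) * (1 + Real.cos θ)) * e3 - 2 * s * hD

lemma F_rep {η : ℂ → ℂ} (hηd : DifferentiableOn ℂ η SlitP)
    (hη0 : ∀ z ∈ SlitP, η z ≠ 0)
    (hηconj : ∀ z ∈ SlitP, η ((starRingEnd ℂ) z) = (starRingEnd ℂ) (η z))
    (harg : ∀ z : ℂ, 0 < z.im → z.arg ≤ (η z).arg ∧ (η z).arg < Real.pi) :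
    ∃ ν : Measure ℝ, IsFiniteMeasure ν ∧ ∀ z ∈ SlitP,
      Integrable (fun θ : ℝ => (2 : ℂ) / ((1 - Real.cos θ) - z * (1 + Real.cos θ))) ν ∧
      1 / (1 - η z) = ∫ θ : ℝ, (2 : ℂ) / ((1 - Real.cos θ) - z * (1 + Real.cos θ)) ∂ν := by
  obtain ⟨hone, hpos⟩ := F_props hηd hη0 hηconj harg
  set f : ℂ → ℂ := fun ζ => cay ζ * (1 / (1 - η (-(cay ζ) ^ 2))) with hf
  have hcayd : DifferentiableOn ℂ cay (Metric.ball 0 1) := by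
    intro ζ hζ
    have := one_add_ne' (ζ := ζ) (by simpa using hζ)
    unfold cay
    apply DifferentiableAt.differentiableWithinAt
    fun_prop (disch := exact this)
  have hmaps : ∀ ζ : ℂ, ‖ζ‖ < 1 → -(cay ζ) ^ 2 ∈ SlitP := fun ζ h => neg_sq_mem (cay_re h)
  have hfd : DifferentiableOn ℂ f (Metric.ball 0 1) := by
    apply hcayd.mul
    apply DifferentiableOn.div (by fun_prop)
    · apply DifferentiableOn.sub (by fun_prop)
      apply hηd.comp (hcayd.pow 2).neg
      intro ζ hζ
      exact hmaps ζ (by simpa using hζ)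
    · intro ζ hζ
      exact hone _ (hmaps ζ (by simpa using hζ))
  have hconj : ∀ ζ : ℂ, ‖ζ‖ < 1 → f ((starRingEnd ℂ) ζ) = (starRingEnd ℂ) (f ζ) := by
    intro ζ hζ
    have e1 : cay ((starRingEnd ℂ) ζ) = (starRingEnd ℂ) (cay ζ) := by simp [cay]
    simp only [hf, e1]
    have e2 : -((starRingEnd ℂ) (cay ζ)) ^ 2 = (starRingEnd ℂ) (-(cay ζ) ^ 2) := by simp
    rw [e2, hηconj _ (hmaps ζ hζ)]
    simp
  have him : (f 0).im = 0 := by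
    have := hconj 0 (by simp)
    rw [map_zero] at this
    exact Complex.conj_eq_iff_im.1 this.symm
  obtain ⟨ν, hν, hrep⟩ := herglotz hfd (fun ζ hζ => hpos _ (cay_re hζ)) him
  refine ⟨ν, hν, fun z hz => ?_⟩
  obtain ⟨s, hs, rfl⟩ := exists_sqrt hz
  have hs0 : s ≠ 0 := by rintro rfl; simp at hs
  have hn := cay_norm hs
  have hn' : ‖(starRingEnd ℂ) (cay s)‖ < 1 := by rwa [Complex.norm_conj]
  have hI : ∀ ζ : ℂ, ‖ζ‖ < 1 → Integrable (hk ζ) ν := fun ζ hζ =>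
    Integrable.of_bound (hk_cont hζ).aestronglyMeasurable _ (Eventually.of_forall (hk_bound hζ))
  have hI2 : Integrable (fun θ => (starRingEnd ℂ) (hk ((starRingEnd ℂ) (cay s)) θ)) ν :=
    (Complex.conjCLE : ℂ →L[ℝ] ℂ).integrable_comp (hI _ hn')
  have hK : ∀ θ : ℝ, (2 : ℂ) / ((1 - Real.cos θ) - (-s ^ 2) * (1 + Real.cos θ)) =
      s⁻¹ * ((1 / 2) * (hk (cay s) θ + (starRingEnd ℂ) (hk ((starRingEnd ℂ) (cay s)) θ))) := by
    intro θ
    rw [(kernel_sym hs θ).1]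
    field_simp
  simp_rw [hK]
  refine ⟨(((hI _ hn).add hI2).const_mul _).const_mul _, ?_⟩
  rw [integral_const_mul, integral_const_mul, integral_add (hI _ hn) hI2, integral_conj,
    ← hrep _ hn, ← hrep _ hn', hconj _ hn, Complex.conj_conj]
  simp only [hf]
  rw [cay_cay hs]
  field_simp
  ring

lemma reverse_dir {η : ℂ → ℂ} (hηd : DifferentiableOn ℂ η SlitP)
    (hη0 : ∀ z ∈ SlitP, η z ≠ 0)
    (hηconj : ∀ z ∈ SlitP, η ((starRingEnd ℂ) z) = (starRingEnd ℂ) (η z))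
    (hlim : Tendsto (fun x : ℝ => η (Complex.ofReal x)) (𝓝[<] (0:ℝ)) (𝓝 0))
    (harg : ∀ z : ℂ, 0 < z.im → z.arg ≤ (η z).arg ∧ (η z).arg < Real.pi) :
    ∃ μ : Measure ℝ, IsProbabilityMeasure μ ∧ μ (Set.Iio 0) = 0 ∧
        μ ≠ Measure.dirac 0 ∧ Set.EqOn η (etaP μ) SlitP := by
  obtain ⟨hone, -⟩ := F_props hηd hη0 hηconj harg
  obtain ⟨ν, hν, hrep⟩ := F_rep hηd hη0 hηconj harg
  -- total mass
  set x : ℕ → ℝ := fun n => -(1 / ((n : ℝ) + 1)) with hx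
  have hxneg : ∀ n, x n < 0 := fun n => by
    simp only [hx]; have : 0 < 1 / ((n : ℝ) + 1) := by positivity
    linarith
  have hxt0 : Tendsto x atTop (𝓝 0) := by
    have := (tendsto_one_div_add_atTop_nhds_zero_nat (𝕜 := ℝ)).neg
    simpa only [neg_zero] using this
  have hxt : Tendsto x atTop (𝓝[<] 0) :=
    tendsto_nhdsWithin_iff.2 ⟨hxt0, Eventually.of_forall hxneg⟩
  have hxmono : Monotone x := by
    intro m n hmn
    simp only [hx]
    have : (m : ℝ) ≤ n := by exact_mod_cast hmn
    have := one_div_le_one_div_of_le (a := (m : ℝ) + 1) (b := (n : ℝ) + 1) (by positivity) (by linarith)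
    linarith
  set q : ℝ → ℝ → ℝ := fun y θ => (1 - Real.cos θ) - y * (1 + Real.cos θ) with hq
  have hqpos : ∀ y θ, y < 0 → 0 < q y θ := by
    intro y θ hy
    have h1 := Real.cos_le_one θ
    have h2 := Real.neg_one_le_cos θ
    simp only [hq]
    rcases eq_or_lt_of_le h1 with h | h
    · rw [h]; linarith
    · nlinarith
  have hqm : ∀ y, Measurable (q y) := by intro y; simp only [hq]; fun_prop
  set dens : ℝ → ENNReal := fun θ => 2 / ENNReal.ofReal (1 - Real.cos θ) with hdens
  have hdm : Measurable dens := by simp only [hdens]; fun_prop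
  have hmass : ∫⁻ θ, dens θ ∂ν = 1 := by
    have h1 : Tendsto (fun n => ∫⁻ θ, 2 / ENNReal.ofReal (q (x n) θ) ∂ν) atTop
        (𝓝 (∫⁻ θ, dens θ ∂ν)) := by
      apply lintegral_tendsto_of_tendsto_of_monotone
      · intro n; have := hqm (x n); fun_prop
      · filter_upwards with θ
        intro m n hmn
        apply ENNReal.div_le_div_left
        apply ENNReal.ofReal_le_ofReal
        simp only [hq]
        have := hxmono hmn
        nlinarith [Real.neg_one_le_cos θ]
      · filter_upwards with θ
        apply ENNReal.Tendsto.const_div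
        · apply ENNReal.tendsto_ofReal
          simp only [hq]
          have := tendsto_const_nhds (x := 1 - Real.cos θ).sub (hxt0.mul_const (1 + Real.cos θ))
          simpa using this
        · right; simp
    have h2 : ∀ n, ∫⁻ θ, 2 / ENNReal.ofReal (q (x n) θ) ∂ν =
        ENNReal.ofReal (1 / (1 - η (x n))).re := by
      intro n
      obtain ⟨hI, hE⟩ := hrep (x n) (Or.inl (by simpa using hxneg n))
      have e1 : ∀ θ : ℝ, (2 : ℂ) / ((1 - Real.cos θ) - (x n : ℂ) * (1 + Real.cos θ)) =
          ((2 / q (x n) θ : ℝ) : ℂ) := by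
        intro θ; simp only [hq]; push_cast; rfl
      simp_rw [e1] at hI hE
      rw [integral_complex_ofReal] at hE
      rw [hE, Complex.ofReal_re, ofReal_integral_eq_lintegral_ofReal]
      · apply lintegral_congr
        intro θ
        rw [ENNReal.ofReal_div_of_pos (hqpos _ θ (hxneg n))]
        simp
      · simpa using hI.re
      · filter_upwards with θ
        have := hqpos _ θ (hxneg n)
        simp only [Pi.zero_apply]
        positivity
    have h3 : Tendsto (fun n => ENNReal.ofReal (1 / (1 - η (x n))).re) atTop (𝓝 1) := by
      have h4 := hlim.comp hxt
      have h5 : Tendsto (fun n => 1 / (1 - η (x n))) atTop (𝓝 (1 / (1 - 0))) :=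
        (tendsto_const_nhds).div (tendsto_const_nhds.sub h4) (by simp)
      have h6 := ENNReal.tendsto_ofReal ((Complex.continuous_re.tendsto _).comp h5)
      simpa [Function.comp_def] using h6
    simp_rw [h2] at h1
    exact tendsto_nhds_unique h1 h3
  have hfin : ∀ᵐ θ ∂ν, dens θ < ⊤ := ae_lt_top hdm (by rw [hmass]; simp)
  have hcos : ∀ᵐ θ ∂ν, 0 < 1 - Real.cos θ := by
    filter_upwards [hfin] with θ hθ
    by_contra! h
    simp only [hdens] at hθ
    rw [ENNReal.ofReal_of_nonpos h, ENNReal.div_zero two_ne_zero] at hθ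
    exact lt_irrefl _ hθ
  set T : ℝ → ℝ := fun θ => (1 + Real.cos θ) / (1 - Real.cos θ) with hT
  have hTm : Measurable T := by simp only [hT]; fun_prop
  have hprob0 : IsProbabilityMeasure (ν.withDensity dens) :=
    ⟨by rw [withDensity_apply _ MeasurableSet.univ, Measure.restrict_univ, hmass]⟩
  set μ : Measure ℝ := (ν.withDensity dens).map T with hμ
  have hprob : IsProbabilityMeasure μ := Measure.isProbabilityMeasure_map hTm.aemeasurable
  have hsupp : μ (Set.Iio 0) = 0 := by
    rw [hμ, Measure.map_apply hTm measurableSet_Iio]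
    convert measure_empty (μ := ν.withDensity dens)
    ext θ
    simp only [Set.mem_preimage, Set.mem_Iio, Set.mem_empty_iff_false, iff_false, not_lt, hT]
    exact div_nonneg (by linarith [Real.neg_one_le_cos θ]) (by linarith [Real.cos_le_one θ])
  have hF : ∀ z ∈ SlitP, ∫ t : ℝ, 1 / (1 - z * (t : ℂ)) ∂μ = 1 / (1 - η z) := by
    intro z hz
    rw [hμ, integral_map hTm.aemeasurable (Measurable.aestronglyMeasurable (by fun_prop)),
      integral_withDensity_eq_integral_toReal_smul hdm hfin, (hrep z hz).2]
    apply integral_congr_ae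
    filter_upwards [hcos] with θ hθ
    have h1 : (dens θ).toReal = 2 / (1 - Real.cos θ) := by
      simp only [hdens]
      rw [ENNReal.toReal_div, ENNReal.toReal_ofReal hθ.le]; simp
    have h2 : (1 - Real.cos θ : ℂ) ≠ 0 := by exact_mod_cast hθ.ne'
    simp only [h1, hT, Complex.real_smul]
    push_cast
    push_cast at h2
    rw [div_mul_div_comm]
    congr 1
    · ring
    · field_simp
  have hE : Set.EqOn η (etaP μ) SlitP := by
    intro z hz
    have h1 := psi_add_one hsupp hz
    rw [hF z hz] at h1
    have := hone z hz
    rw [etaP, h1]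
    field_simp
    ring
  refine ⟨μ, hprob, hsupp, ?_, hE⟩
  intro h0
  have hm : (-1 : ℂ) ∈ SlitP := Or.inl (by simp)
  apply hη0 _ hm
  rw [hE hm, h0, etaP, psiP, integral_dirac]
  simp


/-- Characterization of `η`-transforms of probability measures `μ ≠ δ₀` on
`[0,+∞)`: an analytic function `η : ℂ ∖ [0,∞) → ℂ ∖ {0}` which commutes with
conjugation equals `η_μ` for some probability measure `μ ≠ δ₀` on `[0,+∞)` iff
`η(0−) = 0` and `arg η(z) ∈ [arg z, π)` on `ℂ⁺`.  Moreover such a `μ ≠ δ₀` is a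
point mass iff `arg η_μ(z) = arg z` for some `z ∈ ℂ⁺`. -/
theorem eta_characterization_halfline
    (η : ℂ → ℂ)
    (hηd : DifferentiableOn ℂ η SlitP)
    (hη0 : ∀ z ∈ SlitP, η z ≠ 0)
    (hηconj : ∀ z ∈ SlitP, η ((starRingEnd ℂ) z) = (starRingEnd ℂ) (η z)) :
    ((∃ μ : Measure ℝ, IsProbabilityMeasure μ ∧ μ (Set.Iio 0) = 0 ∧
        μ ≠ Measure.dirac 0 ∧ Set.EqOn η (etaP μ) SlitP) ↔
      (Tendsto (fun x : ℝ => η (Complex.ofReal x)) (𝓝[<] (0:ℝ)) (𝓝 0) ∧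
        ∀ z : ℂ, 0 < z.im → z.arg ≤ (η z).arg ∧ (η z).arg < Real.pi)) ∧
    (∀ μ : Measure ℝ, IsProbabilityMeasure μ → μ (Set.Iio 0) = 0 →
      μ ≠ Measure.dirac 0 →
      ((∃ c : ℝ, μ = Measure.dirac c) ↔
        ∃ z : ℂ, 0 < z.im ∧ (etaP μ z).arg = z.arg)) := by
  refine ⟨⟨?_, ?_⟩, ?_⟩
  · rintro ⟨μ, hμ, hs, hd, hE⟩
    refine ⟨?_, ?_⟩
    · refine (eta_tendsto hs).congr' ?_
      filter_upwards [self_mem_nhdsWithin] with x hx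
      exact (hE (Or.inl (by simpa using hx))).symm
    · intro z hz
      rw [hE (Or.inr hz.ne')]
      obtain ⟨h1, h2, -⟩ := eta_formula hs hd hz
      exact ⟨(arg_le_iff_im hz h1).2 h2, (arg_pos_of_im_pos h1).2⟩
  · rintro ⟨h1, h2⟩
    exact reverse_dir hηd hη0 hηconj h1 h2
  · intro μ hμ hs hd
    constructor
    · rintro ⟨c, rfl⟩
      exact dirac_arg c hs hd
    · rintro ⟨z, hz, harg⟩
      obtain ⟨h1, h2, h3⟩ := eta_formula hs hd hz
      apply h3
      rw [arg_im_mul_conj, harg, sub_self, Real.sin_zero, mul_zero]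
end

section
/- Let η₁, η₂ : ℂ ∖ [0,+∞) → ℂ ∖ [0,+∞) be analytic functions satisfying: (a) lim_{x↑0, x<0} η_j(x) = 0; (b) π > arg η_j(z) > arg z for all z ∈ ℂ⁺; (c) η_j(conj(z)) = conj(η_j(z)) for all z ∈ ℂ ∖ [0,+∞) (j = 1,2). Define h_j(z) = η_j(z)/z and f(z,w) = h₂(z·h₁(z·w)). Then: (1) f is well defined on (ℂ⁺ ∪ ℝ∖{0}) × ℂ⁺ and takes values in ℂ⁺; (2) there exists a unique analytic self-map h of ℂ⁺ such that f(z, h(z)) = h(z) for all z ∈ ℂ⁺. -/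
open Complex Filter Set Topology

/-- The hypotheses on one of the functions. -/
structure Adm (η : ℂ → ℂ) : Prop where
  hd : DifferentiableOn ℂ η SlitP
  hm : Set.MapsTo η SlitP SlitP
  hlim : Tendsto (fun x : ℝ => η (Complex.ofReal x)) (𝓝[<] (0:ℝ)) (𝓝 0)
  harg : ∀ z : ℂ, 0 < z.im → z.arg < (η z).arg ∧ (η z).arg < Real.pi
  hconj : ∀ z ∈ SlitP, η ((starRingEnd ℂ) z) = (starRingEnd ℂ) (η z)

/-- `h(z) = η(z)/z`. -/
noncomputable def HH (η : ℂ → ℂ) (z : ℂ) : ℂ := η z / z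

/-- The two-variable function. -/
noncomputable def FF (η₁ η₂ : ℂ → ℂ) (z w : ℂ) : ℂ := HH η₂ (z * HH η₁ (z * w))

lemma im_pos_iff_arg (z : ℂ) : 0 < z.im ↔ 0 < z.arg ∧ z.arg < Real.pi := by
  constructor
  · intro h
    refine ⟨?_, ?_⟩
    · refine lt_of_le_of_ne (Complex.arg_nonneg_iff.2 h.le) (fun h0 => ?_)
      have := (Complex.arg_eq_zero_iff.1 h0.symm).2
      linarith
    · exact Complex.arg_lt_pi_iff.2 (Or.inr h.ne')
  · rintro ⟨h1, h2⟩
    refine lt_of_le_of_ne (Complex.arg_nonneg_iff.1 h1.le) (fun h0 => ?_)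
    rcases Complex.arg_lt_pi_iff.1 h2 with h | h
    · have := Complex.arg_eq_zero_iff.2 ⟨h, h0.symm⟩
      linarith
    · exact h h0.symm

lemma slit_ne_zero {z : ℂ} (hz : z ∈ SlitP) : z ≠ 0 := by
  rintro rfl
  simp [SlitP] at hz

lemma slit_of_im_pos {z : ℂ} (hz : 0 < z.im) : z ∈ SlitP := Or.inr hz.ne'

lemma slit_conj {z : ℂ} (hz : z ∈ SlitP) : (starRingEnd ℂ) z ∈ SlitP := by
  simpa [SlitP] using hz

lemma isOpen_slit : IsOpen SlitP := by
  have : SlitP = {z : ℂ | z.re < 0} ∪ {z : ℂ | z.im ≠ 0} := by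
    ext z; simp [SlitP]
  rw [this]
  exact (isOpen_lt Complex.continuous_re continuous_const).union
    (isOpen_ne_fun Complex.continuous_im continuous_const)

lemma slit_iff_neg (z : ℂ) : z ∈ SlitP ↔ -z ∈ Complex.slitPlane := by
  simp [SlitP, Complex.mem_slitPlane_iff]

lemma isPreconnected_slit : IsPreconnected SlitP := by
  have h1 : IsPreconnected Complex.slitPlane :=
    (Complex.starConvex_one_slitPlane.isPathConnected (by simp)).isConnected.isPreconnected
  have : SlitP = (fun z : ℂ => -z) '' Complex.slitPlane := by
    ext z
    rw [slit_iff_neg]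
    constructor
    · intro h; exact ⟨-z, h, by simp⟩
    · rintro ⟨w, hw, rfl⟩; simpa using hw
  rw [this]
  exact h1.image _ continuous_neg.continuousOn

lemma ne_zero_of_arg_pos {z : ℂ} (h : 0 < z.arg) : z ≠ 0 := by
  rintro rfl; simp at h

namespace Adm
variable {η η₁ η₂ : ℂ → ℂ}

lemma H_up (A : Adm η) {z : ℂ} (hz : 0 < z.im) :
    0 < (HH η z).arg ∧ (HH η z).arg < Real.pi - z.arg := by
  obtain ⟨h1, h2⟩ := A.harg z hz
  obtain ⟨h3, h4⟩ := (im_pos_iff_arg z).1 hz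
  have hn : η z ≠ 0 := ne_zero_of_arg_pos (h3.trans h1)
  have hz0 : z ≠ 0 := ne_zero_of_arg_pos h3
  have hi : z⁻¹.arg = -z.arg := by
    rw [Complex.arg_inv, if_neg h4.ne]
  have : (HH η z).arg = (η z).arg - z.arg := by
    rw [HH, div_eq_mul_inv, Complex.arg_mul hn (inv_ne_zero hz0), hi]
    · ring
    · rw [hi]; constructor <;> linarith
  rw [this]
  constructor <;> linarith

lemma H_conj (A : Adm η) {z : ℂ} (hz : z ∈ SlitP) :
    HH η ((starRingEnd ℂ) z) = (starRingEnd ℂ) (HH η z) := by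
  simp [HH, A.hconj z hz]

lemma eta_neg (A : Adm η) {z : ℂ} (hz : z.im = 0) (hz' : z.re < 0) :
    (η z).im = 0 ∧ (η z).re < 0 := by
  have hs : z ∈ SlitP := Or.inl hz'
  have hc : (starRingEnd ℂ) z = z := Complex.conj_eq_iff_im.2 hz
  have h1 := A.hconj z hs
  rw [hc] at h1
  have h2 : (η z).im = 0 := Complex.conj_eq_iff_im.1 h1.symm
  refine ⟨h2, ?_⟩
  rcases A.hm hs with h | h
  · exact h
  · exact absurd h2 h

lemma H_neg (A : Adm η) {z : ℂ} (hz : z.im = 0) (hz' : z.re < 0) :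
    (HH η z).im = 0 ∧ 0 < (HH η z).re := by
  obtain ⟨h1, h2⟩ := A.eta_neg hz hz'
  have e1 : z = (z.re : ℂ) := by apply Complex.ext <;> simp [hz]
  have e2 : η z = ((η z).re : ℂ) := by apply Complex.ext <;> simp [h1]
  have : HH η z = (((η z).re / z.re : ℝ) : ℂ) := by
    rw [HH, e2]; nth_rw 2 [e1]; simp
  rw [this]
  exact ⟨Complex.ofReal_im _, by rw [Complex.ofReal_re]; exact div_pos_of_neg_of_neg h2 hz'⟩

lemma H_diff (A : Adm η) : DifferentiableOn ℂ (HH η) SlitP :=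
  A.hd.div differentiableOn_id (fun _ hz => slit_ne_zero hz)

/-- Main sector step. -/
lemma step_up (A₁ : Adm η₁) (A₂ : Adm η₂) {z w : ℂ} (hz : 0 < z.im) (hw0 : w ≠ 0)
    (hw : 0 ≤ w.arg) (hzw : z.arg + w.arg ≤ Real.pi) :
    z * w ∈ SlitP ∧ 0 < (z * HH η₁ (z * w)).im ∧
      0 < (FF η₁ η₂ z w).arg ∧ (FF η₁ η₂ z w).arg < Real.pi - z.arg := by
  obtain ⟨h3, h4⟩ := (im_pos_iff_arg z).1 hz
  have hz0 : z ≠ 0 := ne_zero_of_arg_pos h3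
  have harg : (z * w).arg = z.arg + w.arg :=
    Complex.arg_mul hz0 hw0 ⟨by linarith, hzw⟩
  suffices h : z * w ∈ SlitP ∧ z.arg ≤ (z * HH η₁ (z * w)).arg ∧
      (z * HH η₁ (z * w)).arg < Real.pi by
    obtain ⟨ha, hb, hc⟩ := h
    have him : 0 < (z * HH η₁ (z * w)).im := (im_pos_iff_arg _).2 ⟨by linarith, hc⟩
    obtain ⟨h5, h6⟩ := A₂.H_up him
    exact ⟨ha, him, h5, by unfold FF; linarith⟩
  rcases hzw.lt_or_eq with hlt | heq
  · have him : 0 < (z * w).im := (im_pos_iff_arg _).2 ⟨by linarith, by linarith⟩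
    obtain ⟨h5, h6⟩ := A₁.H_up him
    have := Complex.arg_mul hz0 (ne_zero_of_arg_pos h5) ⟨by linarith, by linarith⟩
    rw [this]
    exact ⟨slit_of_im_pos him, by linarith, by linarith⟩
  · rw [heq] at harg
    obtain ⟨h5, h6⟩ := Complex.arg_eq_pi_iff.1 harg
    obtain ⟨h7, h8⟩ := A₁.H_neg h6 h5
    have e1 : HH η₁ (z * w) = ((HH η₁ (z * w)).re : ℂ) := by apply Complex.ext <;> simp [h7]
    have : (z * HH η₁ (z * w)).arg = z.arg := by
      rw [e1, mul_comm]; exact Complex.arg_real_mul _ h8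
    rw [this]
    exact ⟨Or.inl h5, le_rfl, h4⟩

lemma part1_up (A₁ : Adm η₁) {z w : ℂ} (hz : 0 < z.im) (hw : 0 < w.im)
    (hzw : Real.pi < z.arg + w.arg) :
    z * w ∈ SlitP ∧ 0 < (z * HH η₁ (z * w)).im := by
  obtain ⟨h3, h4⟩ := (im_pos_iff_arg z).1 hz
  obtain ⟨h5, h6⟩ := (im_pos_iff_arg w).1 hw
  have hz0 : z ≠ 0 := ne_zero_of_arg_pos h3
  have hw0 : w ≠ 0 := ne_zero_of_arg_pos h5
  have hnz : (-z).arg = z.arg - Real.pi := Complex.arg_neg_eq_arg_sub_pi_of_im_pos hz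
  have hargn : (-z * w).arg = z.arg - Real.pi + w.arg := by
    rw [Complex.arg_mul (neg_ne_zero.2 hz0) hw0, hnz]
    rw [hnz]; constructor <;> linarith
  have him : 0 < (-z * w).im := (im_pos_iff_arg _).2 ⟨by linarith, by linarith⟩
  have hcim : 0 < ((starRingEnd ℂ) (z * w)).im := by
    rw [Complex.conj_im]; simpa using him
  have hcarg : ((starRingEnd ℂ) (z * w)).arg = Real.pi - (z.arg - Real.pi + w.arg) := by
    have e : (starRingEnd ℂ) (z * w) = - (starRingEnd ℂ) (-z * w) := by simp
    have hneg : ((starRingEnd ℂ) (-z * w)).im < 0 := by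
      rw [Complex.conj_im]; linarith
    rw [e, Complex.arg_neg_eq_arg_add_pi_of_im_neg hneg, Complex.arg_conj, if_neg, hargn]
    · ring
    · rw [hargn]; linarith
  have hs : z * w ∈ SlitP := by
    have := slit_conj (slit_of_im_pos hcim)
    simpa using this
  refine ⟨hs, ?_⟩
  obtain ⟨h7, h8⟩ := A₁.H_up hcim
  rw [A₁.H_conj hs] at h7 h8
  set k := HH η₁ (z * w)
  have hk : k.arg = - ((starRingEnd ℂ) k).arg := by
    have := Complex.arg_conj ((starRingEnd ℂ) k)
    rw [Complex.conj_conj, if_neg (by linarith)] at this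
    exact this
  have hk0 : k ≠ 0 := by
    intro h; rw [h] at h7; simp at h7
  refine (im_pos_iff_arg _).2 ?_
  rw [Complex.arg_mul hz0 hk0]
  · constructor <;> linarith
  · constructor <;> linarith

lemma im_H_pos (A : Adm η) {z : ℂ} (hz : 0 < z.im) : 0 < (HH η z).im := by
  obtain ⟨h1, h2⟩ := A.H_up hz
  obtain ⟨h3, h4⟩ := (im_pos_iff_arg z).1 hz
  exact (im_pos_iff_arg _).2 ⟨h1, by linarith⟩

lemma part1 (A₁ : Adm η₁) (A₂ : Adm η₂) {z w : ℂ}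
    (hz : 0 < z.im ∨ (z.im = 0 ∧ z.re ≠ 0)) (hw : 0 < w.im) :
    z * w ∈ SlitP ∧ 0 < (z * HH η₁ (z * w)).im ∧ 0 < (FF η₁ η₂ z w).im := by
  suffices h : z * w ∈ SlitP ∧ 0 < (z * HH η₁ (z * w)).im from
    ⟨h.1, h.2, A₂.im_H_pos h.2⟩
  rcases hz with hz | ⟨hz, hz'⟩
  · rcases le_or_gt (z.arg + w.arg) Real.pi with h | h
    · obtain ⟨h5, h6⟩ := (im_pos_iff_arg w).1 hw
      have := A₁.step_up A₂ hz (ne_zero_of_arg_pos h5) h5.le h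
      exact ⟨this.1, this.2.1⟩
    · exact A₁.part1_up hz hw h
  · obtain ⟨x, rfl⟩ : ∃ x : ℝ, z = x := ⟨z.re, by apply Complex.ext <;> simp [hz]⟩
    simp only [Complex.ofReal_re] at hz'
    rcases lt_or_gt_of_ne hz' with hx | hx
    · have hcim : 0 < ((starRingEnd ℂ) (x * w)).im := by
        rw [Complex.conj_im, Complex.im_ofReal_mul]; nlinarith
      have hs : (x * w : ℂ) ∈ SlitP := by
        have := slit_conj (slit_of_im_pos hcim)
        simpa using this
      have h := A₁.im_H_pos hcim
      rw [A₁.H_conj hs, Complex.conj_im] at h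
      refine ⟨hs, ?_⟩
      rw [Complex.im_ofReal_mul]; nlinarith
    · have him : 0 < ((x:ℂ) * w).im := by
        rw [Complex.im_ofReal_mul]; positivity
      refine ⟨slit_of_im_pos him, ?_⟩
      rw [Complex.im_ofReal_mul]
      exact mul_pos hx (A₁.im_H_pos him)

end Adm

lemma mono_of_im_nonneg {φ : ℂ → ℂ} (hd : DifferentiableOn ℂ φ SlitP)
    (him : ∀ z : ℂ, 0 < z.im → 0 ≤ (φ z).im) (hre : ∀ x : ℝ, x < 0 → (φ x).im = 0) :
    MonotoneOn (fun x : ℝ => (φ x).re) (Iio 0) := by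
  have key : ∀ x : ℝ, x < 0 → HasDerivAt (fun t : ℝ => (φ t).re) (deriv φ x).re x ∧
      0 ≤ (deriv φ x).re := by
    intro x hx
    have hs : (x : ℂ) ∈ SlitP := Or.inl (by simpa using hx)
    have hD : HasDerivAt φ (deriv φ x) x :=
      (hd.differentiableAt (isOpen_slit.mem_nhds hs)).hasDerivAt
    refine ⟨hD.real_of_complex, ?_⟩
    have h1 : HasDerivAt (fun t : ℂ => φ (x + t * I)) (deriv φ x * I) ((0:ℝ):ℂ) := by
      have h2 : HasDerivAt (fun t : ℂ => (x:ℂ) + t * I) (1 * I) ((0:ℝ):ℂ) :=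
        ((hasDerivAt_id _).mul_const I).const_add _
      have hD' : HasDerivAt φ (deriv φ x) ((x:ℂ) + ((0:ℝ):ℂ) * I) := by simpa using hD
      simpa [Function.comp_def] using HasDerivAt.comp (h := fun t : ℂ => (x:ℂ) + t * I) (h₂ := φ) ((0:ℝ):ℂ) hD' h2
    have h3 : HasDerivAt (fun t : ℂ => -I * φ (x + t * I)) (-I * (deriv φ x * I)) ((0:ℝ):ℂ) :=
      h1.const_mul _
    have h4 := h3.real_of_complex
    have e : (-I * (deriv φ x * I)).re = (deriv φ x).re := by simp
    rw [e] at h4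
    refine ge_of_tendsto h4.tendsto_slope_zero_right ?_
    filter_upwards [self_mem_nhdsWithin] with t ht
    have ht' : (0:ℝ) < t := ht
    have h5 : 0 ≤ (φ (x + t * I)).im := him _ (by simpa using ht')
    have h6 := hre x hx
    simp only [zero_add, smul_eq_mul]
    have : (-I * φ (x + ((0:ℝ):ℂ) * I)).re = 0 := by simp [h6]
    rw [this]
    have : (-I * φ (x + (t:ℂ) * I)).re = (φ (x + t * I)).im := by simp
    rw [this]
    have := inv_pos.2 ht'
    simpa using mul_nonneg this.le h5
  apply monotoneOn_of_deriv_nonneg (convex_Iio 0)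
  · exact fun x hx => (key x hx).1.continuousAt.continuousWithinAt
  · rw [interior_Iio]
    exact fun x hx => (key x hx).1.differentiableAt.differentiableWithinAt
  · rw [interior_Iio]
    intro x hx
    rw [(key x hx).1.deriv]
    exact (key x hx).2

lemma iterate_limit {T : ℝ → ℝ} {a b : ℝ} (ha : 0 < a) (ha1 : a ≤ 1) (hb1 : 1 ≤ b)
    (hmono : MonotoneOn T (Ioi 0)) (hcont : ContinuousOn T (Ioi 0))
    (hTa : a ≤ T a) (hTb : T b ≤ b) {r : ℕ → ℝ} (r0 : r 0 = 1) (rs : ∀ n, r (n+1) = T (r n)) :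
    ∃ L : ℝ, 0 < L ∧ Tendsto r atTop (𝓝 L) ∧ T L = L := by
  have hI : ∀ n, a ≤ r n ∧ r n ≤ b := by
    intro n
    induction n with
    | zero => rw [r0]; exact ⟨ha1, hb1⟩
    | succ n ih =>
      rw [rs]
      have hp : 0 < r n := ha.trans_le ih.1
      exact ⟨hTa.trans (hmono ha hp ih.1), (hmono hp (hp.trans_le ih.2) ih.2).trans hTb⟩
  have hpos : ∀ n, 0 < r n := fun n => ha.trans_le (hI n).1
  have hlim : ∃ L, Tendsto r atTop (𝓝 L) := by
    rcases le_total (r 0) (r 1) with h | h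
    · have hm : Monotone r := by
        apply monotone_nat_of_le_succ
        intro n
        induction n with
        | zero => exact h
        | succ n ih => rw [rs n, rs (n+1)]; exact hmono (hpos _) (hpos _) ih
      exact ⟨_, tendsto_atTop_ciSup hm ⟨b, by rintro _ ⟨n, rfl⟩; exact (hI n).2⟩⟩
    · have hm : Antitone r := by
        apply antitone_nat_of_succ_le
        intro n
        induction n with
        | zero => exact h
        | succ n ih => rw [rs n, rs (n+1)]; exact hmono (hpos _) (hpos _) ih
      exact ⟨_, tendsto_atTop_ciInf hm ⟨a, by rintro _ ⟨n, rfl⟩; exact (hI n).1⟩⟩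
  obtain ⟨L, hL⟩ := hlim
  have hLp : 0 < L := ha.trans_le (ge_of_tendsto' hL (fun n => (hI n).1))
  refine ⟨L, hLp, hL, ?_⟩
  have h1 : Tendsto (fun n => T (r n)) atTop (𝓝 (T L)) :=
    ((hcont.continuousAt (Ioi_mem_nhds hLp)).tendsto).comp hL
  have h2 : Tendsto (fun n => r (n+1)) atTop (𝓝 L) := hL.comp (tendsto_add_atTop_nat 1)
  simp only [rs] at h2
  exact tendsto_nhds_unique h1 h2

lemma real_fixed {k₁ k₂ : ℝ → ℝ} (m₁ : MonotoneOn k₁ (Iio 0)) (m₂ : MonotoneOn k₂ (Iio 0))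
    (p₁ : ∀ x < 0, 0 < k₁ x) (p₂ : ∀ x < 0, 0 < k₂ x)
    (c₁ : ContinuousOn k₁ (Iio 0)) (c₂ : ContinuousOn k₂ (Iio 0))
    (e₁ : MonotoneOn (fun x => x * k₁ x) (Iio 0)) (e₂ : MonotoneOn (fun x => x * k₂ x) (Iio 0))
    (l₁ : Tendsto (fun x => x * k₁ x) (𝓝[<] 0) (𝓝 0))
    (l₂ : Tendsto (fun x => x * k₂ x) (𝓝[<] 0) (𝓝 0))
    {y : ℝ} (hy : y < 0) {r : ℕ → ℝ} (r0 : r 0 = 1)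
    (rs : ∀ n, r (n+1) = k₂ (y * k₁ (y * r n))) :
    ∃ L : ℝ, 0 < L ∧ Tendsto r atTop (𝓝 L) ∧ k₂ (y * k₁ (y * L)) = L := by
  have hyw : ∀ w : ℝ, 0 < w → y * w < 0 := fun w hw => mul_neg_of_neg_of_pos hy hw
  have hu : ∀ w : ℝ, 0 < w → y * k₁ (y * w) < 0 := fun w hw => hyw _ (p₁ _ (hyw w hw))
  have hum : ∀ v w : ℝ, 0 < v → v ≤ w → y * k₁ (y * v) ≤ y * k₁ (y * w) := by
    intro v w hv hvw
    have hw := hv.trans_le hvw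
    exact mul_le_mul_of_nonpos_left (m₁ (hyw w hw) (hyw v hv)
      (mul_le_mul_of_nonpos_left hvw hy.le)) hy.le
  have hmono : MonotoneOn (fun w => k₂ (y * k₁ (y * w))) (Ioi 0) := by
    intro v hv w hw hvw
    exact m₂ (hu v hv) (hu w hw) (hum v w hv hvw)
  have hcont : ContinuousOn (fun w => k₂ (y * k₁ (y * w))) (Ioi 0) := by
    refine c₂.comp (continuousOn_const.mul (c₁.comp (by fun_prop) (fun w hw => hyw w hw)))
      (fun w hw => hu w hw)
  -- ratio identity
  have hratio : ∀ w : ℝ, 0 < w → (y * k₁ (y * w)) * k₂ (y * k₁ (y * w)) * w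
      = (y * w * k₁ (y * w)) * k₂ (y * k₁ (y * w)) := by intro w hw; ring
  have hA : ∃ a : ℝ, 0 < a ∧ a ≤ 1 ∧ a ≤ k₂ (y * k₁ (y * a)) := by
    by_cases h : ∀ w : ℝ, 0 < w → w ≤ 1 → -1 ≤ y * k₁ (y * w)
    · have hk : 0 < k₂ (-1) := p₂ _ (by norm_num)
      refine ⟨min 1 (k₂ (-1)), by positivity, min_le_left _ _, ?_⟩
      have ha : 0 < min 1 (k₂ (-1)) := by positivity
      refine (min_le_right _ _).trans (m₂ (by simp) (hu _ ha) (h _ ha (min_le_left _ _)))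
    · push Not at h
      obtain ⟨w₀, h0, h1, h2⟩ := h
      have hk : 0 < k₂ (-1) := p₂ _ (by norm_num)
      have hev : ∀ᶠ x in 𝓝[<] (0:ℝ), -k₂ (-1) < x * k₁ x :=
        l₁.eventually (lt_mem_nhds (by linarith))
      have hev2 : ∀ᶠ x in 𝓝[<] (0:ℝ), x ∈ Ioo (y * w₀) 0 :=
        Ioo_mem_nhdsLT (hyw _ h0)
      obtain ⟨x, hx1, hx2, hx3⟩ := (hev.and hev2).exists
      have hw : 0 < x / y := div_pos_of_neg_of_neg hx3 hy
      have hxw : y * (x / y) = x := mul_div_cancel₀ x hy.ne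
      have hle : x / y ≤ w₀ := by
        rw [div_le_iff_of_neg hy]; linarith
      refine ⟨x / y, hw, hle.trans h1, ?_⟩
      have hu1 : y * k₁ (y * (x/y)) ≤ -1 := (hum _ _ hw hle).trans h2.le
      have h5 := e₂ (hu _ hw) (show (-1:ℝ) ∈ Iio 0 by simp) hu1
      simp only [hxw] at h5 ⊢
      have hk1 := p₁ x hx3
      -- y k₁ K ≤ -k₂(-1) < x k₁
      have h6 : y * k₁ x * k₂ (y * k₁ x) < x * k₁ x := by linarith
      rw [div_le_iff_of_neg hy]
      have h7 : (k₂ (y * k₁ x) * y) * k₁ x < x * k₁ x := by linarith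
      exact (lt_of_mul_lt_mul_right h7 hk1.le).le
  have hB : ∃ b : ℝ, 1 ≤ b ∧ k₂ (y * k₁ (y * b)) ≤ b := by
    have hk : 0 < k₁ y := p₁ _ hy
    have hev : ∀ᶠ x in 𝓝[<] (0:ℝ), y * k₁ y < x * k₂ x :=
      l₂.eventually (lt_mem_nhds (hyw _ hk))
    obtain ⟨δ, hδ, hδ'⟩ := (mem_nhdsLT_iff_exists_Ioo_subset).1 hev
    have hδ0 : δ < 0 := hδ
    by_cases h : ∀ w : ℝ, 1 ≤ w → y * k₁ (y * w) ≤ δ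
    · refine ⟨max 1 (k₂ δ), le_max_left _ _, ?_⟩
      have hb : 0 < max 1 (k₂ δ) := lt_of_lt_of_le one_pos (le_max_left _ _)
      exact (m₂ (hu _ hb) hδ0 (h _ (le_max_left _ _))).trans (le_max_right _ _)
    · push Not at h
      obtain ⟨w, hw1, hw2⟩ := h
      have hw : 0 < w := by linarith
      refine ⟨w, hw1, ?_⟩
      have h3 : y * k₁ y < (y * k₁ (y * w)) * k₂ (y * k₁ (y * w)) := hδ' ⟨hw2, hu w hw⟩
      have h4 := e₁ (hyw w hw) (show y ∈ Iio 0 from hy) (by nlinarith)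
      simp only at h4
      have hk1 := p₁ _ (hyw w hw)
      have hc : y * k₁ (y * w) < 0 := hu w hw
      have h5 : y * k₁ (y*w) * w < (y * k₁ (y * w)) * k₂ (y * k₁ (y * w)) := by linarith
      exact (lt_of_mul_lt_mul_of_nonpos_left h5 hc.le).le
  obtain ⟨a, ha, ha1, hTa⟩ := hA
  obtain ⟨b, hb1, hTb⟩ := hB
  exact iterate_limit ha ha1 hb1 hmono hcont hTa hTb r0 rs

/-- Normal-families lemma along an ultrafilter. -/
lemma ultra_limit {U : Set ℂ} (hU : IsOpen U) {φ : ℕ → ℂ → ℂ}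
    (hd : ∀ n, DifferentiableOn ℂ (φ n) U) (hb : ∀ n, ∀ z ∈ U, ‖φ n z‖ ≤ 1) (l : Ultrafilter ℕ) :
    ∃ ψ : ℂ → ℂ, DifferentiableOn ℂ ψ U ∧ (∀ z ∈ U, ‖ψ z‖ ≤ 1) ∧
      ∀ z ∈ U, Tendsto (fun n => φ n z) l (𝓝 (ψ z)) := by
  have hex : ∀ z : ℂ, ∃ p : ℂ, z ∈ U → (‖p‖ ≤ 1 ∧ Tendsto (fun n => φ n z) l (𝓝 p)) := by
    intro z
    by_cases hz : z ∈ U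
    · have hc : IsCompact (Metric.closedBall (0:ℂ) 1) := isCompact_closedBall _ _
      obtain ⟨p, hp, hlp⟩ := hc.ultrafilter_le_nhds' (l.map (fun n => φ n z))
        (by
          refine Filter.mem_map.2 (Filter.univ_mem' (fun n => ?_))
          simpa using hb n z hz)
      exact ⟨p, fun _ => ⟨by simpa using hp, hlp⟩⟩
    · exact ⟨0, fun h => absurd h hz⟩
  choose ψ hψ using hex
  refine ⟨ψ, ?_, fun z hz => (hψ z hz).1, fun z hz => (hψ z hz).2⟩
  have hlu : TendstoLocallyUniformlyOn φ ψ (l : Filter ℕ) U := by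
    rw [Metric.tendstoLocallyUniformlyOn_iff]
    intro ε hε x hx
    obtain ⟨r, hr, hrU⟩ := Metric.isOpen_iff.1 hU x hx
    have hlip : ∀ n, ∀ y ∈ Metric.ball x r, dist (φ n y) (φ n x) ≤ 2 / r * dist y x := by
      intro n y hy
      refine Complex.dist_le_div_mul_dist_of_mapsTo_ball ((hd n).mono hrU) ?_ hy
      intro v hv
      rw [Metric.mem_closedBall, dist_eq_norm]
      have := norm_sub_le (φ n v) (φ n x)
      linarith [hb n v (hrU hv), hb n x hx]
    have hlip' : ∀ y ∈ Metric.ball x r, dist (ψ y) (ψ x) ≤ 2 / r * dist y x := by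
      intro y hy
      refine le_of_tendsto (((hψ y (hrU hy)).2).dist ((hψ x hx).2)) ?_
      exact Filter.Eventually.of_forall (fun n => hlip n y hy)
    have hδ : 0 < min r (ε * r / 8) := by positivity
    refine ⟨Metric.ball x (min r (ε * r / 8)), mem_nhdsWithin_of_mem_nhds (Metric.ball_mem_nhds x hδ),
      ?_⟩
    have hev : ∀ᶠ n in (l : Filter ℕ), dist (φ n x) (ψ x) < ε / 4 :=
      (Metric.tendsto_nhds.1 (hψ x hx).2) _ (by positivity)
    filter_upwards [hev] with n hn y hy
    have hy1 : y ∈ Metric.ball x r := Metric.ball_subset_ball (min_le_left _ _) hy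
    have hy2 : dist y x < ε * r / 8 := lt_of_lt_of_le hy (min_le_right _ _)
    have h3 : 2 / r * dist y x ≤ ε / 4 := by
      have : 2 / r * dist y x ≤ 2 / r * (ε * r / 8) := by gcongr
      have e : 2 / r * (ε * r / 8) = ε / 4 := by field_simp; ring
      linarith
    have h4 := hlip n y hy1
    have h5 := hlip' y hy1
    have h6 := dist_triangle4 (ψ y) (ψ x) (φ n x) (φ n y)
    rw [dist_comm (ψ x) (φ n x), dist_comm (φ n x) (φ n y)] at h6
    linarith
  exact hlu.differentiableOn (Filter.Eventually.of_forall hd) hU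

/-- A self-map of the upper half-plane with two fixed points is the identity. -/
lemma two_fixed {g : ℂ → ℂ} (hd : DifferentiableOn ℂ g UHP) (hm : MapsTo g UHP UHP)
    {a b : ℂ} (ha : a ∈ UHP) (hb : b ∈ UHP) (hab : a ≠ b) (ga : g a = a) (gb : g b = b) :
    ∀ w ∈ UHP, g w = w := by
  have ha' : 0 < a.im := ha
  set ā := (starRingEnd ℂ) a with hā
  have hne : ∀ w ∈ UHP, w - ā ≠ 0 := by
    intro w hw h
    have h1 : (w - ā).im = 0 := by rw [h]; simp
    have hw' : 0 < w.im := hw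
    simp [hā] at h1
    linarith
  have haa : a - ā ≠ 0 := hne a ha
  let C : ℂ → ℂ := fun w => (w - a) / (w - ā)
  let D : ℂ → ℂ := fun ζ => (a - ā * ζ) / (1 - ζ)
  have hC : ∀ w ∈ UHP, ‖C w‖ < 1 := by
    intro w hw
    have hw' : 0 < w.im := hw
    simp only [C]
    rw [norm_div, div_lt_one (norm_pos_iff.2 (hne w hw)), ← sq_lt_sq₀ (norm_nonneg _) (norm_nonneg _),
      ← Complex.normSq_eq_norm_sq, ← Complex.normSq_eq_norm_sq, Complex.normSq_apply,
      Complex.normSq_apply]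
    simp [hā]
    nlinarith [mul_pos ha' hw']
  have hζ1 : ∀ ζ ∈ Metric.ball (0:ℂ) 1, 1 - ζ ≠ 0 := by
    intro ζ hζ h
    have : ζ = 1 := by linear_combination -h
    rw [this] at hζ; simp at hζ
  have hD : MapsTo D (Metric.ball 0 1) UHP := by
    intro ζ hζ
    have h1 := hζ1 ζ hζ
    have hn : Complex.normSq ζ < 1 := by
      have : ‖ζ‖ < 1 := by simpa using hζ
      rw [Complex.normSq_eq_norm_sq]; nlinarith [norm_nonneg ζ]
    have hp : 0 < Complex.normSq (1 - ζ) := Complex.normSq_pos.2 h1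
    change 0 < (D ζ).im
    have : (D ζ).im = a.im * (1 - Complex.normSq ζ) / Complex.normSq (1 - ζ) := by
      simp only [D]
      rw [Complex.div_im]
      simp [hā, Complex.normSq_apply]
      ring
    rw [this]
    have : 0 < 1 - Complex.normSq ζ := by linarith
    positivity
  have hDC : ∀ w ∈ UHP, D (C w) = w := by
    intro w hw
    have h1 := hne w hw
    have h2 : 1 - C w = (a - ā) / (w - ā) := by
      simp only [C]; field_simp; ring
    have h3 : a - ā * C w = w * (a - ā) / (w - ā) := by
      simp only [C]; field_simp; ring
    simp only [D, h2, h3]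
    field_simp
  let Φ : ℂ → ℂ := fun ζ => C (g (D ζ))
  have hDd : DifferentiableOn ℂ D (Metric.ball 0 1) := by
    apply DifferentiableOn.div
    · fun_prop
    · fun_prop
    · exact hζ1
  have hCd : DifferentiableOn ℂ C UHP := by
    apply DifferentiableOn.div
    · fun_prop
    · fun_prop
    · exact hne
  have hΦd : DifferentiableOn ℂ Φ (Metric.ball 0 1) :=
    hCd.comp (hd.comp hDd hD) (hm.comp hD)
  have hΦ0 : Φ 0 = 0 := by
    simp [Φ, D, ga, C]
  have hΦm : MapsTo Φ (Metric.ball 0 1) (Metric.closedBall (Φ 0) 1) := by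
    intro ζ hζ
    rw [hΦ0]
    simpa using (hC _ (hm (hD hζ))).le
  have hCb : C b ∈ Metric.ball (0:ℂ) 1 := by simpa using hC b hb
  have hCb0 : C b ≠ 0 := div_ne_zero (sub_ne_zero.2 hab.symm) (hne b hb)
  have hΦb : Φ (C b) = C b := by simp only [Φ]; rw [hDC b hb, gb]
  have hds : dslope Φ 0 (C b) = 1 := by
    rw [dslope_of_ne _ hCb0, slope_def_field, hΦb, hΦ0]
    simp [hCb0]
  have haff := Complex.affine_of_mapsTo_ball_of_norm_dslope_eq_div hΦd hΦm hCb
    (by rw [hds]; simp)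
  intro w hw
  have hCw : C w ∈ Metric.ball (0:ℂ) 1 := by simpa using hC w hw
  have h1 := haff hCw
  simp only [hds, hΦ0] at h1
  simp only [Φ, hDC w hw, sub_zero, smul_eq_mul, mul_one, zero_add] at h1
  rw [← hDC (g w) (hm hw), h1, hDC w hw]

/-- The invariant of the iteration. -/
def Good (z w : ℂ) : Prop :=
  w ∈ Complex.slitPlane ∧ (0 < z.im → 0 ≤ w.arg ∧ z.arg + w.arg ≤ Real.pi) ∧
    (z.im = 0 → w.im = 0) ∧
    (z.im < 0 → 0 ≤ ((starRingEnd ℂ) w).arg ∧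
      ((starRingEnd ℂ) z).arg + ((starRingEnd ℂ) w).arg ≤ Real.pi)

lemma conj_slitPlane {w : ℂ} : (starRingEnd ℂ) w ∈ Complex.slitPlane ↔ w ∈ Complex.slitPlane := by
  simp [Complex.mem_slitPlane_iff]

namespace Adm
variable {η η₁ η₂ : ℂ → ℂ}

lemma F_conj (A₁ : Adm η₁) (A₂ : Adm η₂) {z w : ℂ} (h1 : z * w ∈ SlitP)
    (h2 : z * HH η₁ (z * w) ∈ SlitP) :
    FF η₁ η₂ ((starRingEnd ℂ) z) ((starRingEnd ℂ) w) = (starRingEnd ℂ) (FF η₁ η₂ z w) := by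
  unfold FF
  rw [← map_mul, A₁.H_conj h1, ← map_mul, A₂.H_conj h2]

lemma step (A₁ : Adm η₁) (A₂ : Adm η₂) {z w : ℂ} (hz : z ∈ SlitP) (hw : Good z w) :
    z * w ∈ SlitP ∧ z * HH η₁ (z * w) ∈ SlitP ∧ Good z (FF η₁ η₂ z w) := by
  obtain ⟨hs, hp, h0, hn⟩ := hw
  have hw0 : w ≠ 0 := Complex.slitPlane_ne_zero hs
  rcases lt_trichotomy z.im 0 with him | him | him
  · obtain ⟨ha, hb⟩ := hn him
    have hz' : 0 < ((starRingEnd ℂ) z).im := by rw [Complex.conj_im]; linarith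
    have hw0' : (starRingEnd ℂ) w ≠ 0 := by simpa using hw0
    obtain ⟨h1, h2, h3, h4⟩ := A₁.step_up A₂ hz' hw0' ha hb
    have h5 : z * w ∈ SlitP := by
      have := slit_conj h1
      simpa using this
    have e1 : (starRingEnd ℂ) z * HH η₁ ((starRingEnd ℂ) z * (starRingEnd ℂ) w)
        = (starRingEnd ℂ) (z * HH η₁ (z * w)) := by
      rw [← map_mul, A₁.H_conj h5, map_mul]
    have h6 : z * HH η₁ (z * w) ∈ SlitP := by
      have := slit_conj (slit_of_im_pos h2)
      rw [e1] at this
      simpa using this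
    rw [A₁.F_conj A₂ h5 h6] at h3 h4
    have h7 : 0 < ((starRingEnd ℂ) z).arg := ((im_pos_iff_arg _).1 hz').1
    refine ⟨h5, h6, ?_, fun h => by linarith, fun h => by linarith, fun _ => ⟨h3.le, by linarith⟩⟩
    rw [← conj_slitPlane]
    exact Or.inr ((im_pos_iff_arg _).2 ⟨h3, by linarith⟩).ne'
  · have hre : z.re < 0 := hz.resolve_right (by simp [him])
    have hwi := h0 him
    have hwr : 0 < w.re := hs.resolve_right (by simp [hwi])
    have i1 : (z * w).im = 0 := by simp [him, hwi]
    have r1 : (z * w).re < 0 := by simp [him]; nlinarith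
    obtain ⟨i2, r2⟩ := A₁.H_neg i1 r1
    have i3 : (z * HH η₁ (z * w)).im = 0 := by
      rw [Complex.mul_im, him, i2]; simp
    have r3 : (z * HH η₁ (z * w)).re < 0 := by
      rw [Complex.mul_re, him]; nlinarith
    obtain ⟨i4, r4⟩ := A₂.H_neg i3 r3
    exact ⟨Or.inl r1, Or.inl r3, Or.inl r4, fun h => by linarith, fun _ => i4,
      fun h => by linarith⟩
  · obtain ⟨ha, hb⟩ := hp him
    obtain ⟨h1, h2, h3, h4⟩ := A₁.step_up A₂ him hw0 ha hb
    have h7 : 0 < z.arg := ((im_pos_iff_arg _).1 him).1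
    exact ⟨h1, slit_of_im_pos h2, Or.inr ((im_pos_iff_arg _).2 ⟨h3, by linarith⟩).ne',
      fun _ => ⟨h3.le, by linarith⟩, fun h => by linarith, fun h => by linarith⟩

lemma F_diff (A₁ : Adm η₁) (A₂ : Adm η₂) {k : ℂ → ℂ} (hk : DifferentiableOn ℂ k SlitP)
    (hg : ∀ z ∈ SlitP, Good z (k z)) :
    DifferentiableOn ℂ (fun z => FF η₁ η₂ z (k z)) SlitP := by
  have h1 : DifferentiableOn ℂ (fun z => HH η₁ (z * k z)) SlitP :=
    A₁.H_diff.comp (differentiableOn_id.mul hk) (fun z hz => (A₁.step A₂ hz (hg z hz)).1)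
  exact A₂.H_diff.comp (differentiableOn_id.mul h1) (fun z hz => (A₁.step A₂ hz (hg z hz)).2.1)

end Adm

lemma good_one (z : ℂ) : Good z 1 := by
  refine ⟨by simp, fun _ => ?_, fun _ => by simp, fun _ => ?_⟩
  · simpa using Complex.arg_le_pi z
  · simpa using Complex.arg_le_pi _

/-- square root -/
noncomputable def SS (w : ℂ) : ℂ := Complex.exp (Complex.log w / 2)
/-- Riemann map of the slit plane -/
noncomputable def PP (w : ℂ) : ℂ := (SS w - 1) / (SS w + 1)
/-- its inverse -/
noncomputable def QQ (ζ : ℂ) : ℂ := ((1 + ζ) / (1 - ζ)) ^ 2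

lemma SS_re_pos {w : ℂ} (hw : w ∈ Complex.slitPlane) : 0 < (SS w).re := by
  rw [SS, Complex.exp_re]
  refine mul_pos (Real.exp_pos _) (Real.cos_pos_of_mem_Ioo ?_)
  have h1 := Complex.neg_pi_lt_arg w
  have h2 : w.arg < Real.pi := lt_of_le_of_ne (Complex.arg_le_pi w)
    (Complex.mem_slitPlane_iff_arg.1 hw).1
  have e : (Complex.log w / 2).im = w.arg / 2 := by
    rw [show (2:ℂ) = ((2:ℝ):ℂ) by simp, Complex.div_ofReal_im, Complex.log_im]
  rw [e]
  constructor <;> linarith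

lemma SS_sq {w : ℂ} (hw : w ∈ Complex.slitPlane) : SS w ^ 2 = w := by
  rw [SS, ← Complex.exp_nat_mul]
  have : ((2:ℕ):ℂ) * (Complex.log w / 2) = Complex.log w := by push_cast; ring
  rw [this, Complex.exp_log (Complex.slitPlane_ne_zero hw)]

lemma SS_add_ne {w : ℂ} (hw : w ∈ Complex.slitPlane) : SS w + 1 ≠ 0 := by
  intro h
  have h1 := congrArg Complex.re h
  have := SS_re_pos hw
  simp at h1
  linarith

lemma PP_norm {w : ℂ} (hw : w ∈ Complex.slitPlane) : ‖PP w‖ < 1 := by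
  have h := SS_re_pos hw
  rw [PP, norm_div, div_lt_one (norm_pos_iff.2 (SS_add_ne hw)),
    ← sq_lt_sq₀ (norm_nonneg _) (norm_nonneg _),
    ← Complex.normSq_eq_norm_sq, ← Complex.normSq_eq_norm_sq, Complex.normSq_apply,
    Complex.normSq_apply]
  simp
  nlinarith

lemma QQ_PP {w : ℂ} (hw : w ∈ Complex.slitPlane) : QQ (PP w) = w := by
  have h := SS_add_ne hw
  have h1 : 1 + PP w = 2 * SS w / (SS w + 1) := by rw [PP]; field_simp; ring
  have h2 : 1 - PP w = 2 / (SS w + 1) := by rw [PP]; field_simp; ring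
  have h3 : (1 + PP w) / (1 - PP w) = SS w := by
    rw [h1, h2]; field_simp
  rw [QQ, h3, SS_sq hw]

lemma PP_diff : DifferentiableOn ℂ PP Complex.slitPlane := by
  have h1 : DifferentiableOn ℂ SS Complex.slitPlane := by
    intro w hw
    exact (((Complex.differentiableAt_log hw).div_const 2).cexp).differentiableWithinAt
  exact (h1.sub_const 1).div (h1.add_const 1) (fun w hw => SS_add_ne hw)

lemma one_sub_ne {ζ : ℂ} (h : ‖ζ‖ < 1) : 1 - ζ ≠ 0 := by
  intro h0
  have : ζ = 1 := by linear_combination -h0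
  rw [this] at h; simp at h

lemma QQ_diffAt {ζ : ℂ} (h : ‖ζ‖ < 1) : DifferentiableAt ℂ QQ ζ := by
  have := one_sub_ne h
  unfold QQ
  fun_prop (disch := assumption)

lemma QQ_slit {ζ : ℂ} (h : ‖ζ‖ < 1) : QQ ζ ∈ Complex.slitPlane := by
  have h1 := one_sub_ne h
  have hn : Complex.normSq ζ < 1 := by
    rw [Complex.normSq_eq_norm_sq]; nlinarith [norm_nonneg ζ]
  have hp : 0 < Complex.normSq (1 - ζ) := Complex.normSq_pos.2 h1
  have hre : 0 < ((1 + ζ) / (1 - ζ)).re := by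
    have : ((1 + ζ) / (1 - ζ)).re = (1 - Complex.normSq ζ) / Complex.normSq (1 - ζ) := by
      rw [Complex.div_re]
      simp [Complex.normSq_apply]
      ring
    rw [this]
    exact div_pos (by linarith) hp
  unfold QQ
  set v := (1 + ζ) / (1 - ζ)
  rw [Complex.mem_slitPlane_iff]
  by_cases hv : v.im = 0
  · left
    rw [sq, Complex.mul_re, hv]; nlinarith
  · right
    rw [sq, Complex.mul_im]
    have : v.re * v.im + v.im * v.re = 2 * (v.re * v.im) := by ring
    rw [this]
    exact mul_ne_zero two_ne_zero (mul_ne_zero hre.ne' hv)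

/-- the iterates -/
noncomputable def GG (η₁ η₂ : ℂ → ℂ) : ℕ → ℂ → ℂ
  | 0 => fun _ => 1
  | n + 1 => fun z => FF η₁ η₂ z (GG η₁ η₂ n z)

namespace Adm
variable {η η₁ η₂ : ℂ → ℂ}

lemma G_good (A₁ : Adm η₁) (A₂ : Adm η₂) (n : ℕ) : ∀ z ∈ SlitP, Good z (GG η₁ η₂ n z) := by
  induction n with
  | zero => exact fun z _ => good_one z
  | succ n ih => exact fun z hz => (A₁.step A₂ hz (ih z hz)).2.2

lemma G_diff (A₁ : Adm η₁) (A₂ : Adm η₂) (n : ℕ) :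
    DifferentiableOn ℂ (GG η₁ η₂ n) SlitP := by
  induction n with
  | zero => exact differentiableOn_const _
  | succ n ih => exact A₁.F_diff A₂ ih (A₁.G_good A₂ n)

lemma H_real (A : Adm η) {x : ℝ} (hx : x < 0) : HH η x = ((HH η x).re : ℂ) := by
  have := A.H_neg (z := x) (by simp) (by simpa using hx)
  apply Complex.ext <;> simp [this.1]

lemma eta_real (A : Adm η) {x : ℝ} (hx : x < 0) : x * (HH η x).re = (η x).re := by
  have h : (x:ℂ) ≠ 0 := by simpa using hx.ne
  have : (x:ℂ) * HH η x = η x := by rw [HH]; field_simp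
  rw [← this, Complex.re_ofReal_mul]

lemma H_mono (A : Adm η) : MonotoneOn (fun x : ℝ => (HH η x).re) (Iio 0) :=
  mono_of_im_nonneg A.H_diff (fun _ hz => (A.im_H_pos hz).le)
    (fun x hx => (A.H_neg (z := x) (by simp) (by simpa using hx)).1)

lemma eta_mono (A : Adm η) : MonotoneOn (fun x : ℝ => x * (HH η x).re) (Iio 0) := by
  have h : MonotoneOn (fun x : ℝ => (η x).re) (Iio 0) := by
    refine mono_of_im_nonneg A.hd (fun z hz => ?_)
      (fun x hx => (A.eta_neg (z := x) (by simp) (by simpa using hx)).1)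
    obtain ⟨h1, h2⟩ := A.harg z hz
    exact ((im_pos_iff_arg _).2 ⟨((im_pos_iff_arg z).1 hz).1.trans h1, h2⟩).le
  exact h.congr (fun x hx => (A.eta_real hx).symm)

lemma H_cont (A : Adm η) : ContinuousOn (fun x : ℝ => (HH η x).re) (Iio 0) :=
  Complex.continuous_re.comp_continuousOn (A.H_diff.continuousOn.comp
    Complex.continuous_ofReal.continuousOn (fun x hx => Or.inl (by simpa using hx)))

lemma eta_lim (A : Adm η) : Tendsto (fun x : ℝ => x * (HH η x).re) (𝓝[<] 0) (𝓝 0) := by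
  have h : Tendsto (fun x : ℝ => (η x).re) (𝓝[<] 0) (𝓝 0) := by
    simpa [Function.comp_def] using (Complex.continuous_re.tendsto 0).comp A.hlim
  refine h.congr' ?_
  filter_upwards [self_mem_nhdsWithin] with x hx
  exact (A.eta_real hx).symm

lemma F_real (A₁ : Adm η₁) (A₂ : Adm η₂) {y w : ℝ} (hy : y < 0) (hw : 0 < w) :
    FF η₁ η₂ y w = (((HH η₂ ((y * (HH η₁ ((y * w : ℝ) : ℂ)).re : ℝ) : ℂ)).re : ℝ) : ℂ) := by
  have h1 : y * w < 0 := mul_neg_of_neg_of_pos hy hw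
  have h2 : 0 < (HH η₁ ((y * w : ℝ) : ℂ)).re :=
    (A₁.H_neg (z := ((y * w : ℝ) : ℂ)) (Complex.ofReal_im _)
      (by rw [Complex.ofReal_re]; exact h1)).2
  have h3 := mul_neg_of_neg_of_pos hy h2
  rw [← A₂.H_real h3, Complex.ofReal_mul, ← A₁.H_real h1, Complex.ofReal_mul]
  rfl

lemma G_real (A₁ : Adm η₁) (A₂ : Adm η₂) {y : ℝ} (hy : y < 0) :
    ∃ L : ℝ, 0 < L ∧ Tendsto (fun n => GG η₁ η₂ n y) atTop (𝓝 (L : ℂ)) ∧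
      FF η₁ η₂ y L = L := by
  have hs : (y:ℂ) ∈ SlitP := Or.inl (by simpa using hy)
  have hre : ∀ n, GG η₁ η₂ n y = ((GG η₁ η₂ n y).re : ℂ) ∧ 0 < (GG η₁ η₂ n y).re := by
    intro n
    obtain ⟨h1, _, h2, _⟩ := A₁.G_good A₂ n y hs
    have h3 := h2 (by simp)
    exact ⟨by apply Complex.ext <;> simp [h3], h1.resolve_right (by simp [h3])⟩
  obtain ⟨L, hL, hlim, hfix⟩ := real_fixed A₁.H_mono A₂.H_mono
    (fun x hx => (A₁.H_neg (z := x) (by simp) (by simpa using hx)).2)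
    (fun x hx => (A₂.H_neg (z := x) (by simp) (by simpa using hx)).2)
    A₁.H_cont A₂.H_cont A₁.eta_mono A₂.eta_mono A₁.eta_lim A₂.eta_lim hy
    (r := fun n => (GG η₁ η₂ n y).re) (by simp [GG]) (by
      intro n
      have : GG η₁ η₂ (n+1) y = FF η₁ η₂ y (GG η₁ η₂ n y) := rfl
      rw [this]
      rw [(hre n).1, A₁.F_real A₂ hy (hre n).2]
      simp only [Complex.ofReal_re])
  refine ⟨L, hL, ?_, ?_⟩
  · have := (Complex.continuous_ofReal.tendsto L).comp hlim
    exact this.congr (fun n => (hre n).1.symm)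
  · rw [A₁.F_real A₂ hy hL, hfix]

lemma exists_h (A₁ : Adm η₁) (A₂ : Adm η₂) :
    ∃ h : ℂ → ℂ, DifferentiableOn ℂ h SlitP ∧
      ∀ z ∈ SlitP, Good z (h z) ∧ FF η₁ η₂ z (h z) = h z := by
  have hsl : ∀ n, ∀ z ∈ SlitP, GG η₁ η₂ n z ∈ Complex.slitPlane :=
    fun n z hz => (A₁.G_good A₂ n z hz).1
  let l : Ultrafilter ℕ := Filter.hyperfilter ℕ
  have hl : (l : Filter ℕ) ≤ atTop := Nat.hyperfilter_le_atTop
  obtain ⟨ψ, hψd, hψ1, hψ⟩ := ultra_limit isOpen_slit (φ := fun n z => PP (GG η₁ η₂ n z))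
    (fun n => PP_diff.comp (A₁.G_diff A₂ n) (hsl n)) (fun n z hz => (PP_norm (hsl n z hz)).le) l
  have hm1 : (((-1:ℝ)):ℂ) ∈ SlitP := Or.inl (by simp)
  have hψlt : ∀ z ∈ SlitP, ‖ψ z‖ < 1 := by
    intro z hz
    refine lt_of_le_of_ne (hψ1 z hz) (fun h1 => ?_)
    have hmax : IsMaxOn (norm ∘ ψ) SlitP z := by
      intro x hx
      simpa [h1] using hψ1 x hx
    have heq := Complex.norm_eqOn_of_isPreconnected_of_isMaxOn isPreconnected_slit isOpen_slit
      hψd hz hmax hm1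
    obtain ⟨L, hL, hlim, -⟩ := A₁.G_real A₂ (y := -1) (by norm_num)
    have hLs : (L:ℂ) ∈ Complex.slitPlane := Or.inl (by simpa using hL)
    have hc : Tendsto (fun n => PP (GG η₁ η₂ n ((-1:ℝ):ℂ))) l (𝓝 (PP L)) :=
      ((PP_diff.differentiableAt (Complex.isOpen_slitPlane.mem_nhds hLs)).continuousAt.tendsto).comp
        (hlim.mono_left hl)
    have := tendsto_nhds_unique (hψ _ hm1) hc
    have h2 := PP_norm hLs
    simp only [Function.comp_def, Function.const_apply] at heq
    rw [← this, heq, h1] at h2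
    exact lt_irrefl _ h2
  have hlim : ∀ z ∈ SlitP, Tendsto (fun n => GG η₁ η₂ n z) l (𝓝 (QQ (ψ z))) := by
    intro z hz
    have := ((QQ_diffAt (hψlt z hz)).continuousAt.tendsto).comp (hψ z hz)
    refine this.congr (fun n => ?_)
    exact QQ_PP (hsl n z hz)
  have hd : DifferentiableOn ℂ (fun z => QQ (ψ z)) SlitP := by
    intro z hz
    exact ((QQ_diffAt (hψlt z hz)).comp_differentiableWithinAt z (hψd z hz))
  have hgood : ∀ z ∈ SlitP, Good z (QQ (ψ z)) := by
    intro z hz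
    have hs := QQ_slit (hψlt z hz)
    refine ⟨hs, fun him => ?_, fun him => ?_, fun him => ?_⟩
    · have ht := ((Complex.continuousAt_arg hs).tendsto).comp (hlim z hz)
      have hg := fun n => (A₁.G_good A₂ n z hz).2.1 him
      exact ⟨ge_of_tendsto' ht (fun n => (hg n).1),
        le_of_tendsto' (ht.const_add z.arg) (fun n => (hg n).2)⟩
    · have ht := (Complex.continuous_im.tendsto _).comp (hlim z hz)
      refine tendsto_nhds_unique ht (tendsto_const_nhds.congr (fun n => ?_))
      exact ((A₁.G_good A₂ n z hz).2.2.1 him).symm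
    · have ht := ((Complex.continuousAt_arg (conj_slitPlane.2 hs)).tendsto).comp
        ((Complex.continuous_conj.tendsto _).comp (hlim z hz))
      have hg := fun n => (A₁.G_good A₂ n z hz).2.2.2 him
      exact ⟨ge_of_tendsto' ht (fun n => (hg n).1),
        le_of_tendsto' (ht.const_add ((starRingEnd ℂ) z).arg) (fun n => (hg n).2)⟩
  refine ⟨fun z => QQ (ψ z), hd, fun z hz => ⟨hgood z hz, ?_⟩⟩
  have hreal : ∀ y : ℝ, y < 0 → FF η₁ η₂ y (QQ (ψ y)) = QQ (ψ y) := by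
    intro y hy
    obtain ⟨L, hL, hlim', hfix⟩ := A₁.G_real A₂ hy
    have := tendsto_nhds_unique (hlim y (Or.inl (by simpa using hy))) (hlim'.mono_left hl)
    rw [this, hfix]
  have hF := A₁.F_diff A₂ hd hgood
  have hfreq : ∃ᶠ w in 𝓝[≠] (((-1:ℝ)):ℂ), FF η₁ η₂ w (QQ (ψ w)) = QQ (ψ w) := by
    have ht : Tendsto (fun t : ℝ => (t:ℂ)) (𝓝[≠] (-1:ℝ)) (𝓝[≠] (((-1:ℝ)):ℂ)) := by
      refine tendsto_nhdsWithin_iff.2 ⟨?_, ?_⟩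
      · exact (Complex.continuous_ofReal.tendsto _).mono_left nhdsWithin_le_nhds
      · filter_upwards [self_mem_nhdsWithin] with t ht h
        exact ht (Complex.ofReal_injective h)
    refine ht.frequently (Filter.Eventually.frequently ?_)
    filter_upwards [mem_nhdsWithin_of_mem_nhds (Iio_mem_nhds (show (-1:ℝ) < 0 by norm_num))]
      with t ht
    exact hreal t ht
  exact (hF.analyticOnNhd isOpen_slit).eqOn_of_preconnected_of_frequently_eq
    (hd.analyticOnNhd isOpen_slit) isPreconnected_slit hm1 hfreq hz

lemma fixed_unique (A₁ : Adm η₁) (A₂ : Adm η₂) {z a b : ℂ} (hz : z ∈ UHP) (ha : a ∈ UHP)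
    (hb : b ∈ UHP) (fa : FF η₁ η₂ z a = a) (fb : FF η₁ η₂ z b = b) : a = b := by
  by_contra hab
  have hz' : 0 < z.im := hz
  have hd : DifferentiableOn ℂ (fun w => FF η₁ η₂ z w) UHP := by
    have h1 : DifferentiableOn ℂ (fun w => HH η₁ (z * w)) UHP :=
      A₁.H_diff.comp (differentiableOn_id.const_mul z) (fun w hw => (A₁.part1 A₂ (Or.inl hz) hw).1)
    exact A₂.H_diff.comp (h1.const_mul z)
      (fun w hw => slit_of_im_pos (A₁.part1 A₂ (Or.inl hz) hw).2.1)
  have hid := two_fixed hd (fun w hw => (A₁.part1 A₂ (Or.inl hz) hw).2.2) ha hb hab fa fb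
  obtain ⟨h3, h4⟩ := (im_pos_iff_arg z).1 hz'
  have hw : -(starRingEnd ℂ) z ∈ UHP := by simpa [UHP] using hz'
  have harg : (-(starRingEnd ℂ) z).arg = Real.pi - z.arg := by
    rw [Complex.arg_neg_eq_arg_add_pi_of_im_neg (by simpa using hz'), Complex.arg_conj,
      if_neg h4.ne]
    ring
  have h5 := A₁.step_up A₂ hz' (w := -(starRingEnd ℂ) z)
    (ne_zero_of_arg_pos (by rw [harg]; linarith)) (by rw [harg]; linarith)
    (by rw [harg]; linarith)
  have h6 := hid _ hw
  rw [h6, harg] at h5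
  linarith [h5.2.2.2]

end Adm

/-- Subordination result for self-maps of the slit plane: given analytic
`η₁, η₂ : ℂ ∖ [0,∞) → ℂ ∖ [0,∞)` with `η_j(0−) = 0`, `π > arg η_j(z) > arg z`
on `ℂ⁺`, and `η_j(conj z) = conj(η_j(z))`, with `h_j(z) = η_j(z)/z` and
`f(z,w) = h₂(z·h₁(z·w))`: (1) `f` is well defined on `(ℂ⁺ ∪ ℝ∖{0}) × ℂ⁺` with
values in `ℂ⁺`; (2) there is a unique analytic self-map `h` of `ℂ⁺` with
`f(z, h(z)) = h(z)` for all `z ∈ ℂ⁺`. -/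
theorem second_subordination_result
    (η₁ η₂ : ℂ → ℂ)
    (hd₁ : DifferentiableOn ℂ η₁ SlitP) (hm₁ : Set.MapsTo η₁ SlitP SlitP)
    (hd₂ : DifferentiableOn ℂ η₂ SlitP) (hm₂ : Set.MapsTo η₂ SlitP SlitP)
    (hlim₁ : Tendsto (fun x : ℝ => η₁ (Complex.ofReal x)) (𝓝[<] (0:ℝ)) (𝓝 0))
    (hlim₂ : Tendsto (fun x : ℝ => η₂ (Complex.ofReal x)) (𝓝[<] (0:ℝ)) (𝓝 0))
    (harg₁ : ∀ z : ℂ, 0 < z.im → z.arg < (η₁ z).arg ∧ (η₁ z).arg < Real.pi)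
    (harg₂ : ∀ z : ℂ, 0 < z.im → z.arg < (η₂ z).arg ∧ (η₂ z).arg < Real.pi)
    (hconj₁ : ∀ z ∈ SlitP, η₁ ((starRingEnd ℂ) z) = (starRingEnd ℂ) (η₁ z))
    (hconj₂ : ∀ z ∈ SlitP, η₂ ((starRingEnd ℂ) z) = (starRingEnd ℂ) (η₂ z)) :
    (∀ z w : ℂ, (0 < z.im ∨ (z.im = 0 ∧ z.re ≠ 0)) → w ∈ UHP →
        z * w ∈ SlitP ∧ (z * (η₁ (z * w) / (z * w))) ∈ UHP ∧
        (η₂ (z * (η₁ (z * w) / (z * w))) / (z * (η₁ (z * w) / (z * w)))) ∈ UHP) ∧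
    ∃ h : ℂ → ℂ, DifferentiableOn ℂ h UHP ∧ Set.MapsTo h UHP UHP ∧
      (∀ z ∈ UHP,
        η₂ (z * (η₁ (z * h z) / (z * h z))) / (z * (η₁ (z * h z) / (z * h z))) = h z) ∧
      (∀ h' : ℂ → ℂ, DifferentiableOn ℂ h' UHP → Set.MapsTo h' UHP UHP →
        (∀ z ∈ UHP,
          η₂ (z * (η₁ (z * h' z) / (z * h' z))) / (z * (η₁ (z * h' z) / (z * h' z))) = h' z) →
        Set.EqOn h h' UHP) := by
  have A₁ : Adm η₁ := ⟨hd₁, hm₁, hlim₁, harg₁, hconj₁⟩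
  have A₂ : Adm η₂ := ⟨hd₂, hm₂, hlim₂, harg₂, hconj₂⟩
  refine ⟨fun z w hz hw => A₁.part1 A₂ hz hw, ?_⟩
  obtain ⟨h, hd, hh⟩ := A₁.exists_h A₂
  have hsub : UHP ⊆ SlitP := fun z hz => slit_of_im_pos hz
  have hup : Set.MapsTo h UHP UHP := by
    intro z hz
    have hz' : 0 < z.im := hz
    obtain ⟨hg, hf⟩ := hh z (hsub hz)
    obtain ⟨h1, h2⟩ := hg.2.1 hz'
    have h3 := A₁.step_up A₂ hz' (Complex.slitPlane_ne_zero hg.1) h1 h2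
    rw [hf] at h3
    have h4 := ((im_pos_iff_arg z).1 hz').1
    exact (im_pos_iff_arg _).2 ⟨h3.2.2.1, by linarith [h3.2.2.2]⟩
  refine ⟨h, hd.mono hsub, hup, fun z hz => (hh z (hsub hz)).2, ?_⟩
  intro h' _ hm' hf' z hz
  exact A₁.fixed_unique A₂ hz (hup hz) (hm' hz) (hh z (hsub hz)).2 (hf' z hz)
end
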